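/- arXiv:1909.05924 — 2 statements merged into one kernel-verified Lean document; each statement's English description precedes it below -/
import Mathlib

section
/- For every m ≥ 1 even and every n ≥ 2, the n-th bidirectional topological complexity of the m-sphere equals n+1: TC^β_n(S^m) = n+1, where S^m is the unit sphere in ℝ^{m+1}. -/
open unitInterval

noncomputable section

/-- The point `j/(n-1)` of the unit interval, for `j : Fin n`.
These are the `n` evaluation points `0, 1/(n-1), …, (n-2)/(n-1), 1`. -/
def evalPt (n : ℕ) (j : Fin n) : unitInterval :=
  ⟨(j : ℝ) / ((n : ℝ) - 1), by
    have hn : 1 ≤ n := j.pos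
    rcases eq_or_lt_of_le hn with h | h
    · have hn1 : n = 1 := h.symm
      subst hn1
      simp [Fin.fin_one_eq_zero j]
    · have h1 : (0 : ℝ) < (n : ℝ) - 1 := by
        have : (1 : ℝ) < (n : ℝ) := by exact_mod_cast h
        linarith
      constructor
      · exact div_nonneg (Nat.cast_nonneg _) h1.le
      · rw [div_le_one h1]
        have hj : (j : ℕ) + 1 ≤ n := j.is_lt
        have : ((j : ℕ) : ℝ) + 1 ≤ (n : ℝ) := by exact_mod_cast hj
        linarith⟩

/-- Coordinate reversal (the involution `β`) on `n`-tuples: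
`β·(x_1,…,x_n) = (x_n,…,x_1)`. -/
def rtuple {X : Type*} {n : ℕ} (x : Fin n → X) : Fin n → X := fun j => x j.rev

/-- Path reversal (the involution `β`) on the free path space `C(I,X)`:
`(β·γ)(t) = γ(1-t)`. -/
def rpath {X : Type*} [TopologicalSpace X] (γ : C(unitInterval, X)) : C(unitInterval, X) :=
  γ.comp ⟨unitInterval.symm, unitInterval.continuous_symm⟩

/-- `X^n` can be covered by `k` open sets, on each of which there is a continuous
section of the evaluation map `e_n : C(I,X) → X^n`,
`γ ↦ (γ(0), γ(1/(n-1)), …, γ(1))`. -/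
def HasPlanners (X : Type*) [TopologicalSpace X] (n k : ℕ) : Prop :=
  ∃ U : Fin k → Set (Fin n → X),
    (∀ i, IsOpen (U i)) ∧ (⋃ i, U i) = Set.univ ∧
    (∀ i, ∃ s : C(U i, C(unitInterval, X)),
      ∀ x : U i, ∀ j : Fin n, s x (evalPt n j) = (x : Fin n → X) j)

/-- The `n`-th (ordinary, higher) topological complexity `TC_n(X)`, as a value in `ℕ∞`. -/
def TCn (X : Type*) [TopologicalSpace X] (n : ℕ) : ℕ∞ :=
  sInf {k : ℕ∞ | ∃ m : ℕ, (m : ℕ∞) = k ∧ HasPlanners X n m}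

/-- `X^n` can be covered by `k` β-invariant open sets, on each of which there is a
continuous β-equivariant section of the evaluation map `e_n : C(I,X) → X^n`
(a bidirectional motion planner). -/
def HasBidirPlanners (X : Type*) [TopologicalSpace X] (n k : ℕ) : Prop :=
  ∃ U : Fin k → Set (Fin n → X),
    (∀ i, IsOpen (U i)) ∧ (⋃ i, U i) = Set.univ ∧
    (∀ i, ∀ x ∈ U i, rtuple x ∈ U i) ∧
    (∀ i, ∃ s : C(U i, C(unitInterval, X)),
      (∀ x : U i, ∀ j : Fin n, s x (evalPt n j) = (x : Fin n → X) j) ∧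
      (∀ x : U i, ∀ hx : rtuple (x : Fin n → X) ∈ U i,
        s ⟨rtuple (x : Fin n → X), hx⟩ = rpath (s x)))

/-- The `n`-th bidirectional topological complexity `TC^β_n(X)`, as a value in `ℕ∞`. -/
def TCbeta (X : Type*) [TopologicalSpace X] (n : ℕ) : ℕ∞ :=
  sInf {k : ℕ∞ | ∃ m : ℕ, (m : ℕ∞) = k ∧ HasBidirPlanners X n m}

/-- The action of a permutation `sg ∈ Σ_n` on `n`-tuples (by permuting coordinates). -/
def permTuple {X : Type*} {n : ℕ} (sg : Equiv.Perm (Fin n)) (x : Fin n → X) : Fin n → X :=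
  fun j => x (sg j)

/-- `X^n` can be covered by `k` `Σ_n`-invariant open sets, on each of which there is a
continuous `Σ_n`-equivariant section of `E_n : X^{J_n} → X^n`,
`(α_1,…,α_n) ↦ (α_1(1),…,α_n(1))`, where `X^{J_n}` is the space of `n`-tuples of paths
with a common initial point. -/
def HasSymPlanners (X : Type*) [TopologicalSpace X] (n k : ℕ) : Prop :=
  ∃ U : Fin k → Set (Fin n → X),
    (∀ i, IsOpen (U i)) ∧ (⋃ i, U i) = Set.univ ∧
    (∀ i, ∀ sg : Equiv.Perm (Fin n), ∀ x ∈ U i, permTuple sg x ∈ U i) ∧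
    (∀ i, ∃ s : C(U i, Fin n → C(unitInterval, X)),
      (∀ x : U i, ∀ j j' : Fin n, s x j 0 = s x j' 0) ∧
      (∀ x : U i, ∀ j : Fin n, s x j 1 = (x : Fin n → X) j) ∧
      (∀ x : U i, ∀ sg : Equiv.Perm (Fin n),
        ∀ hx : permTuple sg (x : Fin n → X) ∈ U i,
        s ⟨permTuple sg (x : Fin n → X), hx⟩ = permTuple sg (s x)))

/-- The `n`-th symmetrized topological complexity `TC^Σ_n(X)`, as a value in `ℕ∞`. -/
def TCsym (X : Type*) [TopologicalSpace X] (n : ℕ) : ℕ∞ :=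
  sInf {k : ℕ∞ | ∃ m : ℕ, (m : ℕ∞) = k ∧ HasSymPlanners X n m}

/-- The unit sphere `S^m ⊂ ℝ^{m+1}`. -/
abbrev Sph (m : ℕ) : Type :=
  Metric.sphere (0 : EuclideanSpace ℝ (Fin (m + 1))) 1

end


namespace ASC

/-- Alexander-Spanier coboundary on integer cochains (functions on lists). -/
def dl {X : Type*} : (List X → ℤ) → List X → ℤ
  | _, [] => 0
  | φ, x :: xs => φ xs - dl (fun l => φ (x :: l)) xs

theorem dl_sub {X : Type*} (l : List X) : ∀ φ ψ : List X → ℤ,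
    dl (fun l => φ l - ψ l) l = dl φ l - dl ψ l := by
  induction l with
  | nil => intro φ ψ; simp [dl]
  | cons x xs ih =>
    intro φ ψ
    simp only [dl]
    rw [ih (fun l => φ (x :: l)) (fun l => ψ (x :: l))]
    ring

theorem dl_zero {X : Type*} (l : List X) : dl (fun _ : List X => (0 : ℤ)) l = 0 := by
  induction l with
  | nil => simp [dl]
  | cons x xs ih => simp only [dl]; rw [ih]; ring

theorem dl_add {X : Type*} (l : List X) : ∀ φ ψ : List X → ℤ,
    dl (fun l => φ l + ψ l) l = dl φ l + dl ψ l := by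
  induction l with
  | nil => intro φ ψ; simp [dl]
  | cons x xs ih =>
    intro φ ψ
    simp only [dl]
    rw [ih (fun l => φ (x :: l)) (fun l => ψ (x :: l))]
    ring

theorem dl_smul {X : Type*} (c : ℤ) (l : List X) : ∀ φ : List X → ℤ,
    dl (fun l => c * φ l) l = c * dl φ l := by
  induction l with
  | nil => intro φ; simp [dl]
  | cons x xs ih =>
    intro φ
    simp only [dl]
    rw [ih (fun l => φ (x :: l))]
    ring

theorem dl_sum {X ι : Type*} (s : Finset ι) (φ : ι → List X → ℤ) (l : List X) :
    dl (fun l => ∑ i ∈ s, φ i l) l = ∑ i ∈ s, dl (φ i) l := by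
  classical
  induction s using Finset.induction_on with
  | empty => simp [dl_zero]
  | insert a s ha ih =>
    simp only [Finset.sum_insert ha]
    rw [dl_add l (φ a) (fun l => ∑ i ∈ s, φ i l), ih]

theorem dl_dl {X : Type*} (l : List X) : ∀ φ : List X → ℤ, dl (dl φ) l = 0 := by
  induction l with
  | nil => intro φ; simp [dl]
  | cons x xs ih =>
    intro φ
    have h : (fun l => dl φ (x :: l)) = fun l => φ l - dl (fun l => φ (x :: l)) l := by
      funext l; simp [dl]
    rw [dl, h, dl_sub, ih]
    ring

theorem dl_map {X Y : Type*} (f : X → Y) (l : List X) : ∀ φ : List Y → ℤ,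
    dl (fun l => φ (l.map f)) l = dl φ (l.map f) := by
  induction l with
  | nil => intro φ; simp [dl]
  | cons x xs ih =>
    intro φ
    simp only [dl, List.map_cons]
    rw [ih (fun l => φ (f x :: l))]

theorem dl_ofFn {X : Type*} : ∀ (q : ℕ) (φ : List X → ℤ) (v : Fin (q + 1) → X),
    dl φ (List.ofFn v) = ∑ k : Fin (q + 1), (-1) ^ (k : ℕ) * φ (List.ofFn (v ∘ k.succAbove))
  | 0, φ, v => by
    simp [dl]
  | q + 1, φ, v => by
    rw [List.ofFn_succ, dl, dl_ofFn q, Fin.sum_univ_succ (n := q + 1)]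
    have h0 : (v ∘ (0 : Fin (q + 2)).succAbove) = fun i => v i.succ := by
      funext i; simp
    rw [h0, sub_eq_add_neg, ← Finset.sum_neg_distrib]
    simp only [Fin.val_zero, pow_zero, one_mul]
    congr 1
    refine Finset.sum_congr rfl fun k _ => ?_
    have h1 : List.ofFn (v ∘ k.succ.succAbove) =
        v 0 :: List.ofFn ((fun i : Fin (q + 1) => v i.succ) ∘ k.succAbove) := by
      rw [List.ofFn_succ]
      congr 1
      congr 1
      funext i
      simp
    rw [h1]
    simp only [Fin.val_succ, pow_succ]
    ring

/-- Locality: the coboundary only depends on values on lists with elements from `l`. -/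
theorem dl_congr {X : Type*} (l : List X) : ∀ φ ψ : List X → ℤ,
    (∀ l' : List X, l'.Sublist l → l'.length + 1 = l.length → φ l' = ψ l') →
      dl φ l = dl ψ l := by
  induction l with
  | nil => intro φ ψ _; simp [dl]
  | cons x xs ih =>
    intro φ ψ h
    simp only [dl]
    rw [h xs (List.sublist_cons_self x xs) (by simp)]
    rw [ih (fun l => φ (x :: l)) (fun l => ψ (x :: l))]
    intro l' hl' hlen
    exact h _ (hl'.cons_cons x) (by simp [hlen])

/-- Prism operator. -/
def pr {X Y : Type*} (f g : X → Y) : (List Y → ℤ) → List X → ℤ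
  | _, [] => 0
  | φ, x :: xs => φ (f x :: g x :: xs.map g) - pr f g (fun l => φ (f x :: l)) xs

theorem pr_sub {X Y : Type*} (f g : X → Y) (l : List X) : ∀ φ ψ : List Y → ℤ,
    pr f g (fun l => φ l - ψ l) l = pr f g φ l - pr f g ψ l := by
  induction l with
  | nil => intro φ ψ; simp [pr]
  | cons x xs ih =>
    intro φ ψ
    simp only [pr]
    rw [ih (fun l => φ (f x :: l)) (fun l => ψ (f x :: l))]
    ring

theorem pr_homotopy {X Y : Type*} (f g : X → Y) (l : List X) : ∀ φ : List Y → ℤ,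
    dl (pr f g φ) l + pr f g (dl φ) l = φ (l.map g) - φ (l.map f) := by
  induction l with
  | nil => intro φ; simp [pr, dl]
  | cons x xs ih =>
    intro φ
    have h1 : (fun l => pr f g φ (x :: l)) = fun l =>
        (fun l : List X => φ (f x :: g x :: l.map g)) l - pr f g (fun l => φ (f x :: l)) l := by
      funext l; simp [pr]
    have h2 : (fun l => dl φ (f x :: l)) = fun l => φ l - dl (fun l => φ (f x :: l)) l := by
      funext l; simp [dl]
    rw [dl, h1, dl_sub, pr, h2, pr_sub]
    have h3 := ih (fun l => φ (f x :: l))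
    have h4 := dl_map g xs (fun l => φ (f x :: g x :: l))
    rw [h4]
    simp only [dl, List.map_cons]
    linarith

theorem pr_eq_zero {X Y : Type*} (f g : X → Y) (l : List X) : ∀ φ : List Y → ℤ,
    (∀ l' : List Y, l'.length = l.length + 1 → (∀ a ∈ l', ∃ b ∈ l, a = f b ∨ a = g b) →
      φ l' = 0) → pr f g φ l = 0 := by
  induction l with
  | nil => intro φ _; simp [pr]
  | cons x xs ih =>
    intro φ h
    rw [pr, ih, h]
    · simp
    · simp
    · intro a ha
      simp only [List.mem_cons, List.mem_map] at ha
      rcases ha with rfl | rfl | ⟨b, hb, rfl⟩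
      · exact ⟨x, by simp, Or.inl rfl⟩
      · exact ⟨x, by simp, Or.inr rfl⟩
      · exact ⟨b, by simp [hb], Or.inr rfl⟩
    · intro l' hl' h'
      apply h
      · simp [hl']
      · intro a ha
        rcases List.mem_cons.1 ha with rfl | ha
        · exact ⟨x, by simp, Or.inl rfl⟩
        · obtain ⟨b, hb, hab⟩ := h' a ha
          exact ⟨b, by simp [hb], hab⟩

/-- Cup product (with `φ` of degree `p`). -/
def cup {X : Type*} (p : ℕ) (φ ψ : List X → ℤ) (l : List X) : ℤ :=
  φ (l.take (p + 1)) * ψ (l.drop p)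

theorem dl_cup {X : Type*} : ∀ (p : ℕ) (φ ψ : List X → ℤ) (l : List X), p + 2 ≤ l.length →
    dl (cup p φ ψ) l = cup (p + 1) (dl φ) ψ l + (-1) ^ p * cup p φ (dl ψ) l
  | 0, φ, ψ, l => by
    intro hl
    match l, hl with
    | x :: y :: ys, _ =>
      have h1 : (fun l => cup 0 φ ψ (x :: l)) = fun l => φ [x] * ψ (x :: l) := by
        funext l; simp [cup]
      rw [dl, h1, dl_smul]
      simp [cup, dl]
      ring
  | p + 1, φ, ψ, l => by
    intro hl
    match l, hl with
    | x :: xs, hl =>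
      have h1 : (fun l => cup (p + 1) φ ψ (x :: l)) = fun l => cup p (fun l => φ (x :: l)) ψ l := by
        funext l; simp [cup]
      rw [dl, h1, dl_cup p _ _ xs (by simpa using hl)]
      simp only [cup, List.take_succ_cons, List.drop_succ_cons, dl]
      ring

/-- Iterated cup product of cochains of degree `m`. -/
def cupAll {X : Type*} (m : ℕ) : List (List X → ℤ) → List X → ℤ
  | [], _ => 1
  | φ :: φs, l => cup m φ (cupAll m φs) l

end ASC

namespace ASC

theorem tele {X : Type*} (Good : List X → Prop)
    (hG : ∀ l l' : List X, l'.Sublist l → Good l → Good l') (m : ℕ) (hm : 1 ≤ m)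
    (as : List ((List X → ℤ) × (List X → ℤ)))
    (hc : ∀ a ∈ as, ∀ l, Good l → l.length = m + 2 → dl a.1 l = 0) :
    (∀ l, Good l → l.length = as.length * m + 2 →
      dl (cupAll m (as.map fun p l => p.1 l - dl p.2 l)) l = 0) ∧
    ∃ ψ : List X → ℤ, (as = [] → ψ = fun _ => 0) ∧
      ∀ l, Good l → l.length = as.length * m + 1 →
        cupAll m (as.map Prod.fst) l - cupAll m (as.map fun p l => p.1 l - dl p.2 l) l
          = dl ψ l := by
  obtain ⟨k, rfl⟩ : ∃ k, m = k + 1 := ⟨m - 1, by omega⟩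
  induction as with
  | nil =>
    refine ⟨?_, fun _ => 0, fun _ => rfl, ?_⟩
    · intro l _ hl
      obtain ⟨x, y, rfl⟩ := List.length_eq_two.1 (by simpa using hl)
      simp [dl, cupAll]
    · intro l _ _
      simp [cupAll, dl_zero]
  | cons a as ih =>
    obtain ⟨ih1, ψ, hψ0, ih2⟩ := ih (fun b hb => hc b (List.mem_cons_of_mem _ hb))
    have ha := hc a (by simp)
    set A := cupAll (k + 1) (as.map Prod.fst) with hA
    set A' := cupAll (k + 1) (as.map fun p l => p.1 l - dl p.2 l) with hA'
    have eA : cupAll (k + 1) ((a :: as).map Prod.fst) = cup (k + 1) a.1 A := by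
      funext l; simp [cupAll, hA]
    have eA' : cupAll (k + 1) ((a :: as).map fun p l => p.1 l - dl p.2 l)
        = cup (k + 1) (fun l => a.1 l - dl a.2 l) A' := by
      funext l; simp only [cupAll, hA', List.map_cons]
    rw [eA, eA']
    refine ⟨?_, fun l => (-1) ^ (k + 1) * cup (k + 1) a.1 ψ l + cup k a.2 A' l, by simp, ?_⟩
    · intro l hl hlen
      have hlen' : l.length = as.length * (k + 1) + (k + 1) + 2 := by
        rw [hlen, List.length_cons]; ring
      rw [dl_cup _ _ _ _ (by omega)]
      have e1 : dl (fun l => a.1 l - dl a.2 l) (l.take (k + 1 + 1 + 1)) = 0 := by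
        rw [dl_sub, dl_dl, ha _ (hG _ _ (List.take_sublist _ _) hl)]
        · simp
        · rw [List.length_take]; omega
      have e2 : dl A' (l.drop (k + 1)) = 0 := by
        apply ih1 _ (hG _ _ (List.drop_sublist _ _) hl)
        rw [List.length_drop]; omega
      simp [cup, e1, e2]
    · intro l hl hlen
      have hlen' : l.length = as.length * (k + 1) + (k + 1) + 1 := by
        rw [hlen, List.length_cons]; ring
      rw [dl_add, dl_smul, dl_cup k _ _ _ (by omega)]
      have e3 : dl (cup (k + 1) a.1 ψ) l
          = (-1) ^ (k + 1) * cup (k + 1) a.1 (dl ψ) l := by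
        rcases Nat.eq_zero_or_pos as.length with h0 | h0
        · have : as = [] := List.length_eq_zero_iff.1 h0
          rw [hψ0 this]
          have : cup (k + 1) a.1 (fun _ => 0) = fun _ => 0 := by
            funext l; simp [cup]
          rw [this, dl_zero]
          simp [cup, dl_zero]
        · have : 1 * (k + 1) ≤ as.length * (k + 1) := Nat.mul_le_mul_right _ h0
          rw [dl_cup (k + 1) _ _ _ (by omega)]
          have e1 : dl a.1 (l.take (k + 1 + 1 + 1)) = 0 := by
            rw [ha _ (hG _ _ (List.take_sublist _ _) hl)]
            rw [List.length_take]; omega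
          simp [cup, e1]
      have e4 : A (l.drop (k + 1)) - A' (l.drop (k + 1)) = dl ψ (l.drop (k + 1)) := by
        apply ih2 _ (hG _ _ (List.drop_sublist _ _) hl)
        rw [List.length_drop]; omega
      have e5 : cup k a.2 (dl A') l = 0 := by
        have : dl A' (l.drop k) = 0 := by
          apply ih1 _ (hG _ _ (List.drop_sublist _ _) hl)
          rw [List.length_drop]; omega
        simp [cup, this]
      rw [e3, e5]
      have e6 : ((-1 : ℤ) ^ (k + 1)) * (-1) ^ (k + 1) = 1 := by
        rw [← mul_pow]; simp
      rw [← mul_assoc, e6]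
      simp only [cup]
      rw [← e4]
      ring

theorem cupAll_eq_zero {X : Type*} (m : ℕ) : ∀ (φs : List (List X → ℤ)) (l : List X),
    l.length = φs.length * m + 1 →
    (∃ φ ∈ φs, ∀ l', l'.Sublist l → l'.length = m + 1 → φ l' = 0) → cupAll m φs l = 0
  | [], l => by simp
  | φ :: φs, l => by
    intro hl h
    have hl' : l.length = φs.length * m + m + 1 := by rw [hl, List.length_cons]; ring
    simp only [cupAll, cup]
    obtain ⟨χ, hχ, h⟩ := h
    rcases List.mem_cons.1 hχ with rfl | hχ
    · rw [h _ (List.take_sublist _ _) (by rw [List.length_take]; omega)]; simp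
    · rw [cupAll_eq_zero m φs (l.drop m) (by rw [List.length_drop]; omega)
        ⟨χ, hχ, fun l' h1 h2 => h l' (h1.trans (List.drop_sublist _ _)) h2⟩]
      simp

/-- Freudenthal simplices in the discrete torus. -/
def vtx {N : ℕ} {ι : Type*} [DecidableEq ι] {K : ℕ} (e : Fin N ≃ ι) (p : ι → ZMod K)
    (sgm : Equiv.Perm ι) (k : ℕ) : ι → ZMod K :=
  p + ∑ r : Fin N, if (r : ℕ) < k then Pi.single (sgm (e r)) 1 else 0

/-- Evaluation on the fundamental cycle of the discrete torus. -/
def ev {N : ℕ} {ι : Type*} [DecidableEq ι] [Fintype ι] {K : ℕ} [NeZero K] (e : Fin N ≃ ι)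
    (φ : List (ι → ZMod K) → ℤ) : ℤ :=
  ∑ p : ι → ZMod K, ∑ sgm : Equiv.Perm ι, ((Equiv.Perm.sign sgm : ℤˣ) : ℤ) *
    φ (List.ofFn fun k : Fin (N + 1) => vtx e p sgm k)

theorem vtx_swap {N : ℕ} {ι : Type*} [DecidableEq ι] {K : ℕ} (e : Fin N ≃ ι) (p : ι → ZMod K)
    (sgm : Equiv.Perm ι) (a : ℕ) (ha : a + 1 < N) (k : ℕ) (hk : k ≠ a + 1) :
    vtx e p (sgm * Equiv.swap (e ⟨a, by omega⟩) (e ⟨a + 1, ha⟩)) k = vtx e p sgm k := by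
  unfold vtx
  congr 1
  refine Fintype.sum_equiv (Equiv.swap (⟨a, by omega⟩ : Fin N) ⟨a + 1, ha⟩) _ _ ?_
  intro r
  have h1 : (Equiv.swap (e ⟨a, by omega⟩) (e ⟨a + 1, ha⟩)) (e r)
      = e (Equiv.swap (⟨a, by omega⟩ : Fin N) ⟨a + 1, ha⟩ r) := by
    rw [e.injective.map_swap]
  rw [Equiv.Perm.mul_apply, h1]
  have h2 : (r : ℕ) < k ↔ ((Equiv.swap (⟨a, by omega⟩ : Fin N) ⟨a + 1, ha⟩ r : Fin N) : ℕ) < k := by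
    by_cases ra : r = ⟨a, by omega⟩
    · rw [ra, Equiv.swap_apply_left]; simp only; omega
    · by_cases rb : r = ⟨a + 1, ha⟩
      · rw [rb, Equiv.swap_apply_right]; simp only; omega
      · rw [Equiv.swap_apply_of_ne_of_ne ra rb]
  simp only [h2]

theorem vtx_rot {N : ℕ} {ι : Type*} [DecidableEq ι] {K : ℕ} (e : Fin (N + 1) ≃ ι)
    (p : ι → ZMod K) (sgm : Equiv.Perm ι) (k : ℕ) (hk : k ≤ N) :
    vtx e (p + Pi.single (sgm (e 0)) 1) (sgm * (e.permCongr (finRotate (N + 1)))) k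
      = vtx e p sgm (k + 1) := by
  unfold vtx
  rw [add_assoc]
  congr 1
  rw [Fin.sum_univ_succ (n := N) (f := fun r => if (r : ℕ) < k + 1 then _ else _)]
  simp only [Fin.val_zero, Nat.zero_lt_succ, if_true]
  congr 1
  rw [Fin.sum_univ_castSucc]
  have : ¬ (N < k) := by omega
  simp only [Fin.val_last, this, if_false, add_zero, Fin.val_castSucc, Fin.val_succ,
    Nat.add_lt_add_iff_right]
  refine Finset.sum_congr rfl fun r _ => ?_
  simp [Equiv.permCongr_apply]

theorem ev_dl {N : ℕ} {ι : Type*} [DecidableEq ι] [Fintype ι] {K : ℕ} [NeZero K]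
    (e : Fin (N + 1) ≃ ι) (ψ : List (ι → ZMod K) → ℤ) : ev e (dl ψ) = 0 := by
  unfold ev
  simp only [dl_ofFn, Finset.mul_sum]
  have key : ∀ k : Fin (N + 1 + 1), k ≠ 0 → k ≠ Fin.last _ → ∀ p : ι → ZMod K,
      ∑ sgm : Equiv.Perm ι, ((Equiv.Perm.sign sgm : ℤˣ) : ℤ) * ((-1) ^ (k : ℕ) *
        ψ (List.ofFn ((fun k : Fin (N + 1 + 1) => vtx e p sgm k) ∘ k.succAbove))) = 0 := by
    intro k hk0 hkl p
    obtain ⟨a, ha⟩ : ∃ a, (k : ℕ) = a + 1 :=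
      ⟨(k : ℕ) - 1, by have : (k : ℕ) ≠ 0 := fun h => hk0 (Fin.ext h); omega⟩
    have haN : a + 1 < N + 1 := by
      have : (k : ℕ) ≠ N + 1 := fun h => hkl (Fin.ext h)
      omega
    set s := Equiv.swap (e ⟨a, by omega⟩) (e ⟨a + 1, haN⟩) with hs
    have hsgn : Equiv.Perm.sign s = -1 := by
      apply Equiv.Perm.sign_swap
      intro h
      have := e.injective h
      simp at this
    have h1 := Fintype.sum_equiv (Equiv.mulRight s)
      (fun sgm : Equiv.Perm ι => ((Equiv.Perm.sign (sgm * s) : ℤˣ) : ℤ) * ((-1) ^ (k : ℕ) *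
        ψ (List.ofFn ((fun k : Fin (N + 1 + 1) => vtx e p (sgm * s) k) ∘ k.succAbove))))
      (fun sgm : Equiv.Perm ι => ((Equiv.Perm.sign sgm : ℤˣ) : ℤ) * ((-1) ^ (k : ℕ) *
        ψ (List.ofFn ((fun k : Fin (N + 1 + 1) => vtx e p sgm k) ∘ k.succAbove))))
      (fun sgm => by simp)
    have h2 : ∀ sgm : Equiv.Perm ι,
        ((fun k : Fin (N + 1 + 1) => vtx e p (sgm * s) k) ∘ k.succAbove) =
        ((fun k : Fin (N + 1 + 1) => vtx e p sgm k) ∘ k.succAbove) := by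
      intro sgm
      funext j
      simp only [Function.comp]
      apply vtx_swap e p sgm a haN
      intro h
      exact Fin.succAbove_ne k j (Fin.ext (h.trans ha.symm))
    simp only [h2, Equiv.Perm.sign_mul, hsgn] at h1
    simp only [mul_neg, mul_one, Units.val_neg, neg_mul, Finset.sum_neg_distrib] at h1
    linarith
  have h3 : ∀ p : ι → ZMod K, ∑ sgm : Equiv.Perm ι, ∑ k : Fin (N + 1 + 1),
      ((Equiv.Perm.sign sgm : ℤˣ) : ℤ) * ((-1) ^ (k : ℕ) *
        ψ (List.ofFn ((fun k : Fin (N + 1 + 1) => vtx e p sgm k) ∘ k.succAbove))) =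
      ∑ sgm : Equiv.Perm ι, (((Equiv.Perm.sign sgm : ℤˣ) : ℤ) *
        ψ (List.ofFn (fun k : Fin (N + 1) => vtx e p sgm (k + 1))) +
        ((Equiv.Perm.sign sgm : ℤˣ) : ℤ) * ((-1) ^ (N + 1) *
        ψ (List.ofFn (fun k : Fin (N + 1) => vtx e p sgm k)))) := by
    intro p
    rw [Finset.sum_comm, Fin.sum_univ_succ, Fin.sum_univ_castSucc, 
      Finset.sum_eq_zero (s := (Finset.univ : Finset (Fin N))), zero_add,
      ← Finset.sum_add_distrib]
    · refine Finset.sum_congr rfl fun sgm _ => ?_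
      simp [Function.comp_def, Fin.succAbove_last]
    · intro k _
      refine key _ (Fin.succ_ne_zero _) ?_ p
      intro h
      have := congrArg Fin.val h
      simp at this
      omega
  simp only [h3]
  simp only [Finset.sum_add_distrib]
  have h4 : ∑ p : ι → ZMod K, ∑ sgm : Equiv.Perm ι, ((Equiv.Perm.sign sgm : ℤˣ) : ℤ) *
        ψ (List.ofFn (fun k : Fin (N + 1) => vtx e p sgm k)) =
      ∑ p : ι → ZMod K, ∑ sgm : Equiv.Perm ι, (-1) ^ N * (((Equiv.Perm.sign sgm : ℤˣ) : ℤ) *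
        ψ (List.ofFn (fun k : Fin (N + 1) => vtx e p sgm (k + 1)))) := by
    set c := e.permCongr (finRotate (N + 1)) with hc
    have hcs : Equiv.Perm.sign c = (-1) ^ N := by
      rw [hc, Equiv.Perm.sign_permCongr, sign_finRotate, Nat.add_sub_cancel]
    rw [Finset.sum_comm, Finset.sum_comm (s := (Finset.univ : Finset (ι → ZMod K)))]
    symm
    refine Fintype.sum_equiv (Equiv.mulRight c) _ _ fun sgm => ?_
    refine Fintype.sum_equiv (Equiv.addRight (Pi.single (sgm (e 0)) 1)) _ _ fun p => ?_
    have : (fun k : Fin (N + 1) => vtx e p sgm (k + 1)) = fun k : Fin (N + 1) =>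
        vtx e (p + Pi.single (sgm (e 0)) 1) (sgm * c) k := by
      funext k
      rw [hc, vtx_rot e p sgm k (by omega)]
    simp only [Equiv.coe_mulRight, Equiv.coe_addRight]
    rw [← this, Equiv.Perm.sign_mul, hcs]
    push_cast
    ring
  have h5 : ∑ p : ι → ZMod K, ∑ sgm : Equiv.Perm ι, ((Equiv.Perm.sign sgm : ℤˣ) : ℤ) *
        ((-1) ^ (N + 1) * ψ (List.ofFn (fun k : Fin (N + 1) => vtx e p sgm k))) =
      (-1) ^ (N + 1) * ∑ p : ι → ZMod K, ∑ sgm : Equiv.Perm ι, ((Equiv.Perm.sign sgm : ℤˣ) : ℤ) *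
        ψ (List.ofFn (fun k : Fin (N + 1) => vtx e p sgm k)) := by
    simp only [Finset.mul_sum]
    refine Finset.sum_congr rfl fun p _ => Finset.sum_congr rfl fun sgm _ => by ring
  rw [h5, h4]
  simp only [← Finset.mul_sum]
  have e6 : ((-1 : ℤ) ^ (N + 1)) * (-1) ^ N = -1 := by
    rw [pow_succ, mul_right_comm, ← mul_pow]; simp
  rw [← mul_assoc, e6]
  ring

end ASC

namespace ASC

theorem exists_ofFn {X : Type*} (l : List X) (q : ℕ) (h : l.length = q) :
    ∃ v : Fin q → X, l = List.ofFn v := by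
  subst h
  exact ⟨l.get, (List.ofFn_get l).symm⟩

open Classical in
/-- Sperner colour of a point of the sphere. -/
noncomputable def col {m : ℕ} (x : Sph m) : Fin (m + 2) :=
  if h : (Finset.univ.filter fun i : Fin (m + 1) => x.1 i < 0).Nonempty then
    ((Finset.univ.filter fun i : Fin (m + 1) => x.1 i < 0).min' h).castSucc
  else Fin.last (m + 1)

theorem col_last {m : ℕ} (x : Sph m) (h : col x = Fin.last (m + 1)) (i : Fin (m + 1)) :
    0 ≤ x.1 i := by
  unfold col at h
  split_ifs at h with h'
  · exact absurd h (Fin.castSucc_lt_last _).ne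
  · by_contra hi
    exact h' ⟨i, by simpa using hi⟩

theorem col_castSucc {m : ℕ} (x : Sph m) (i : Fin (m + 1)) (h : col x = i.castSucc) :
    x.1 i < 0 ∧ ∀ j < i, 0 ≤ x.1 j := by
  unfold col at h
  split_ifs at h with h'
  · have h := Fin.castSucc_injective _ h
    constructor
    · have := Finset.min'_mem _ h'
      rw [h] at this
      simpa using this
    · intro j hj
      by_contra hx
      have := Finset.min'_le (Finset.univ.filter fun i : Fin (m + 1) => x.1 i < 0) j
        (by simpa using hx)
      rw [h] at this
      exact absurd hj (not_lt.2 this)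
  · exact absurd h.symm (Fin.castSucc_lt_last _).ne

theorem col_eq_last {m : ℕ} (x : Sph m) (h : ∀ i, 0 ≤ x.1 i) : col x = Fin.last (m + 1) := by
  rcases Fin.eq_castSucc_or_eq_last (col x) with ⟨i, hi⟩ | hi
  · exact absurd (h i) (not_le.2 (col_castSucc x i hi).1)
  · exact hi

theorem col_eq_castSucc {m : ℕ} (x : Sph m) (i : Fin (m + 1)) (h1 : x.1 i < 0)
    (h2 : ∀ j < i, 0 ≤ x.1 j) : col x = i.castSucc := by
  rcases Fin.eq_castSucc_or_eq_last (col x) with ⟨k, hk⟩ | hk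
  · obtain ⟨h3, h4⟩ := col_castSucc x k hk
    rcases lt_trichotomy i k with h | h | h
    · exact absurd h1 (not_lt.2 (h4 i h))
    · rw [hk, h]
    · exact absurd h3 (not_lt.2 (h2 k h))
  · exact absurd h1 (not_lt.2 (col_last x hk i))

/-- The colours of the distinguished facet: all but `m`. -/
def kap {m : ℕ} (j : Fin (m + 1)) : Fin (m + 2) := (Fin.last m).castSucc.succAbove j

/-- The fundamental cocycle of the sphere. -/
noncomputable def om (m : ℕ) (l : List (Sph m)) : ℤ :=
  Matrix.det (Matrix.of fun i j : Fin (m + 1) =>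
    if (l[(i : ℕ)]?).map col = some (kap j) then (1 : ℤ) else 0)

theorem om_ofFn {m : ℕ} (v : Fin (m + 1) → Sph m) :
    om m (List.ofFn v) =
      Matrix.det (Matrix.of fun i j : Fin (m + 1) => if col (v i) = kap j then (1 : ℤ) else 0) := by
  unfold om
  congr 1
  ext i j
  have : (List.ofFn v)[(i : ℕ)]? = some (v i) := by
    rw [List.getElem?_eq_getElem (by rw [List.length_ofFn]; exact i.2), List.getElem_ofFn]
  simp only [Matrix.of_apply]
  rw [this]
  simp only [Option.map_some, Option.some.injEq]

/-- Small lists. -/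
def Small {X : Type*} [PseudoMetricSpace X] (ε : ℝ) (l : List X) : Prop :=
  ∀ a ∈ l, ∀ b ∈ l, dist a b < ε

theorem Small.sublist {X : Type*} [PseudoMetricSpace X] {ε : ℝ} {l l' : List X}
    (h : l'.Sublist l) (hl : Small ε l) : Small ε l' :=
  fun a ha b hb => hl a (h.subset ha) b (h.subset hb)

theorem col_not_surj {m : ℕ} (v : Fin (m + 2) → Sph m)
    (hv : ∀ i j, dist (v i) (v j) < 1 / (m + 1)) :
    ¬ Function.Surjective (fun i => col (v i)) := by
  intro hs
  obtain ⟨b, hb⟩ := hs (Fin.last _)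
  have hb := col_last _ hb
  have h1 : ∀ i : Fin (m + 1), (v b).1 i < 1 / (m + 1) := by
    intro i
    obtain ⟨a, ha⟩ := hs i.castSucc
    have ha := (col_castSucc _ _ ha).1
    have h2 := hv b a
    have h3 : ‖((v b).1 - (v a).1) i‖ ≤ ‖(v b).1 - (v a).1‖ := PiLp.norm_apply_le _ i
    rw [Subtype.dist_eq, dist_eq_norm] at h2
    have h4 := le_abs_self (((v b).1 - (v a).1) i)
    rw [Real.norm_eq_abs] at h3
    simp only [PiLp.sub_apply] at h3 h4
    linarith
  have h5 : ‖(v b).1‖ ^ 2 = 1 := by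
    rw [norm_eq_of_mem_sphere (v b)]; norm_num
  rw [EuclideanSpace.norm_sq_eq] at h5
  have hmpos : (0 : ℝ) < (m : ℝ) + 1 := by positivity
  have h6 : ∀ i : Fin (m + 1), ‖(v b).1 i‖ ^ 2 < 1 / (m + 1) := by
    intro i
    rw [Real.norm_eq_abs, sq_abs]
    have h7 : 1 / ((m : ℝ) + 1) ≤ 1 := by
      rw [div_le_one hmpos]; linarith [(Nat.cast_nonneg m : (0 : ℝ) ≤ m)]
    nlinarith [h1 i, hb i]
  have h8 : ∑ i : Fin (m + 1), ‖(v b).1 i‖ ^ 2 < ∑ _i : Fin (m + 1), 1 / ((m : ℝ) + 1) :=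
    Finset.sum_lt_sum_of_nonempty Finset.univ_nonempty fun i _ => h6 i
  rw [h5] at h8
  simp at h8
  rw [mul_inv_cancel₀ hmpos.ne'] at h8
  exact lt_irrefl _ h8

theorem om_cocycle {m : ℕ} (l : List (Sph m)) (hl : l.length = m + 2)
    (hs : Small (1 / (m + 1)) l) : dl (om m) l = 0 := by
  obtain ⟨v, rfl⟩ := exists_ofFn l _ hl
  have hv : ∀ i j, dist (v i) (v j) < 1 / ((m : ℝ) + 1) := fun i j =>
    hs _ (List.mem_ofFn.2 ⟨i, rfl⟩) _ (List.mem_ofFn.2 ⟨j, rfl⟩)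
  have h1 := col_not_surj v hv
  rw [← Finite.injective_iff_surjective] at h1
  simp only [Function.Injective, not_forall] at h1
  obtain ⟨a, b, hab, hne⟩ := h1
  rw [dl_ofFn]
  simp only [om_ofFn]
  let W : Matrix (Fin (m + 2)) (Fin (m + 2)) ℤ := Matrix.of fun i =>
    Fin.cons 1 (fun j : Fin (m + 1) => if col (v i) = kap j then (1 : ℤ) else 0)
  have h2 : W.det = 0 := by
    apply Matrix.det_zero_of_row_eq hne
    funext j
    simp only [W, Matrix.of_apply, hab]
  rw [Matrix.det_succ_column_zero] at h2
  refine Eq.trans ?_ h2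
  refine Finset.sum_congr rfl fun k _ => ?_
  simp only [W, Matrix.of_apply, Fin.cons_zero, mul_one]
  congr 2

theorem om_ne_zero {m : ℕ} (v : Fin (m + 1) → Sph m) (h : om m (List.ofFn v) ≠ 0) :
    ∃ c : Fin (m + 1) → Fin (m + 1), Function.Injective c ∧ ∀ i, col (v i) = kap (c i) := by
  rw [om_ofFn] at h
  have h1 : ∀ i, ∃ j, col (v i) = kap j := by
    intro i
    by_contra hi
    push Not at hi
    apply h
    apply Matrix.det_eq_zero_of_row_eq_zero i
    intro j
    simp [hi j]
  choose c hc using h1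
  refine ⟨c, ?_, hc⟩
  intro i j hij
  by_contra hne
  apply h
  apply Matrix.det_zero_of_row_eq hne
  funext k
  simp only [Matrix.of_apply, hc, hij]

theorem om_one {m : ℕ} (v : Fin (m + 1) → Sph m) (h : ∀ i, col (v i) = kap i) :
    om m (List.ofFn v) = 1 := by
  rw [om_ofFn]
  convert Matrix.det_one (n := Fin (m + 1)) (R := ℤ)
  ext i j
  simp only [Matrix.of_apply, h, Matrix.one_apply]
  have : (kap i = kap j) ↔ i = j := (Fin.succAbove_right_injective).eq_iff
  simp [this]

theorem homotopy_exact {m : ℕ} {Y : Type*} [PseudoMetricSpace Y] (S : Set Y) (hS : IsCompact S)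
    (H : Y → ℝ → Sph m)
    (hH : ContinuousOn (fun q : Y × ℝ => H q.1 q.2) (S ×ˢ Set.Icc 0 1)) :
    ∃ ε > 0, ∃ η : List Y → ℤ, ∀ l : List Y, l.length = m + 1 → (∀ a ∈ l, a ∈ S) → Small ε l →
      om m (l.map fun y => H y 1) - om m (l.map fun y => H y 0) = dl η l := by
  have hc : IsCompact (S ×ˢ Set.Icc (0 : ℝ) 1) := hS.prod isCompact_Icc
  have hu := hc.uniformContinuousOn_of_continuous hH
  rw [Metric.uniformContinuousOn_iff] at hu
  obtain ⟨ε, hε, hu⟩ := hu (1 / (m + 1)) (by positivity)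
  obtain ⟨M, hM⟩ := exists_nat_one_div_lt hε
  let f : ℕ → Y → Sph m := fun k y => H y (k / (M + 1))
  refine ⟨ε, hε, fun l => ∑ k ∈ Finset.range (M + 1), pr (f k) (f (k + 1)) (om m) l, ?_⟩
  intro l hlen hlS hl
  rw [dl_sum]
  have hMp : (0 : ℝ) < M + 1 := by positivity
  have hmem : ∀ k : ℕ, k ≤ M + 1 → (k : ℝ) / (M + 1) ∈ Set.Icc (0 : ℝ) 1 := by
    intro k hk
    refine ⟨by positivity, ?_⟩
    rw [div_le_one hMp]
    exact_mod_cast hk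
  have step : ∀ k ∈ Finset.range (M + 1), dl (pr (f k) (f (k + 1)) (om m)) l
      = om m (l.map (f (k + 1))) - om m (l.map (f k)) := by
    intro k hk
    have hk := Finset.mem_range.1 hk
    rw [← pr_homotopy, pr_eq_zero, add_zero]
    intro l' hl' hmem'
    apply om_cocycle l' (by omega)
    have hd : ∀ a ∈ l, ∀ b ∈ l, ∀ i j : ℕ, (i = k ∨ i = k + 1) → (j = k ∨ j = k + 1) →
        dist (f i a) (f j b) < 1 / (m + 1) := by
      intro a ha b hb i j hi hj
      refine hu (a, (i : ℝ) / (M + 1)) ⟨hlS a ha, hmem i (by omega)⟩ (b, (j : ℝ) / (M + 1))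
        ⟨hlS b hb, hmem j (by omega)⟩ ?_
      rw [Prod.dist_eq, max_lt_iff]
      refine ⟨hl a ha b hb, ?_⟩
      refine lt_of_le_of_lt ?_ hM
      simp only
      rw [Real.dist_eq, ← sub_div, abs_div, abs_of_pos hMp]
      gcongr
      rcases hi with rfl | rfl <;> rcases hj with rfl | rfl <;> simp
    intro a ha b hb
    obtain ⟨a', ha', ha''⟩ := hmem' a ha
    obtain ⟨b', hb', hb''⟩ := hmem' b hb
    rcases ha'' with rfl | rfl <;> rcases hb'' with rfl | rfl <;>
      exact hd _ ha' _ hb' _ _ (by simp) (by simp)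
  rw [Finset.sum_congr rfl step, Finset.sum_range_sub (fun k => om m (l.map (f k)))]
  have e1 : f (M + 1) = fun y => H y 1 := by
    funext y
    simp only [f]
    congr 1
    push_cast
    exact div_self hMp.ne'
  have e0 : f 0 = fun y => H y 0 := by
    funext y
    simp [f]
  rw [e1, e0]

end ASC

namespace ASC

theorem vtx_apply {N : ℕ} {ι : Type*} [DecidableEq ι] {K : ℕ} (e : Fin N ≃ ι) (p : ι → ZMod K)
    (sgm : Equiv.Perm ι) (k : ℕ) (x : ι) :
    vtx e p sgm k x = p x + if (e.symm (sgm.symm x) : ℕ) < k then 1 else 0 := by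
  unfold vtx
  rw [Pi.add_apply, Finset.sum_apply, Finset.sum_eq_single (e.symm (sgm.symm x))]
  · simp only [Equiv.apply_symm_apply]
    split_ifs <;> simp
  · intro r _ hr
    have : x ≠ sgm (e r) := by
      rintro rfl
      simp at hr
    split_ifs <;> simp [this]
  · simp

/-- Product of squared sines. -/
noncomputable def lam {m : ℕ} (s : Fin m → ℝ) : ℝ := ∏ i, Real.sin (Real.pi * s i) ^ 2

/-- Unnormalised collapse map torus → sphere. -/
noncomputable def FF {m : ℕ} (s : Fin m → ℝ) : EuclideanSpace ℝ (Fin (m + 1)) :=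
  WithLp.toLp 2 (Fin.snoc (α := fun _ => ℝ)
    (fun i => -(lam s * Real.sin (2 * Real.pi * s i))) (lam s - 1 / 2))

theorem FF_castSucc {m : ℕ} (s : Fin m → ℝ) (i : Fin m) :
    FF s i.castSucc = -(lam s * Real.sin (2 * Real.pi * s i)) := by
  simp [FF]

theorem FF_last {m : ℕ} (s : Fin m → ℝ) : FF s (Fin.last m) = lam s - 1 / 2 := by
  simp [FF]

theorem continuous_lam {m : ℕ} : Continuous (lam (m := m)) := by
  unfold lam
  fun_prop

theorem continuous_FF {m : ℕ} : Continuous (FF (m := m)) := by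
  unfold FF
  refine (PiLp.continuous_toLp 2 _).comp ?_
  refine continuous_pi fun j => ?_
  have := continuous_lam (m := m)
  refine Fin.lastCases ?_ (fun i => ?_) j
  · simp only [Fin.snoc_last]; fun_prop
  · simp only [Fin.snoc_castSucc]; fun_prop

theorem FF_ne_zero {m : ℕ} (s : Fin m → ℝ) : FF s ≠ 0 := by
  intro h
  have hl : lam s = 1 / 2 := by
    have := FF_last s
    rw [h] at this
    simp at this
    linarith
  have h1 : ∀ i, Real.sin (Real.pi * s i) ^ 2 = 1 := by
    intro i
    have h2 := FF_castSucc s i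
    rw [h, hl] at h2
    simp at h2
    rw [mul_assoc, Real.sin_two_mul] at h2
    have h3 : Real.sin (Real.pi * s i) ≠ 0 := by
      intro h0
      have : lam s = 0 := Finset.prod_eq_zero (Finset.mem_univ i) (by rw [h0]; simp)
      rw [hl] at this
      norm_num at this
    have h4 : Real.cos (Real.pi * s i) = 0 := by
      rcases mul_eq_zero.1 h2 with h5 | h5
      · rcases mul_eq_zero.1 h5 with h6 | h6
        · norm_num at h6
        · exact absurd h6 h3
      · exact h5
    have := Real.sin_sq_add_cos_sq (Real.pi * s i)
    rw [h4] at this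
    linarith
  unfold lam at hl
  rw [Finset.prod_congr rfl (fun i _ => h1 i)] at hl
  norm_num at hl

theorem lam_periodic {m : ℕ} (s s' : Fin m → ℝ) (h : ∀ i, ∃ z : ℤ, s i = s' i + z) :
    lam s = lam s' := by
  unfold lam
  refine Finset.prod_congr rfl fun i _ => ?_
  obtain ⟨z, hz⟩ := h i
  rw [hz, mul_add, mul_comm _ (z : ℝ), Real.sin_add_int_mul_pi, mul_pow]
  have : (((-1 : ℝ)) ^ z) ^ 2 = 1 := by
    rw [← zpow_natCast, ← zpow_mul, mul_comm, zpow_mul]; simp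
  rw [this, one_mul]

theorem FF_periodic {m : ℕ} (s s' : Fin m → ℝ) (h : ∀ i, ∃ z : ℤ, s i = s' i + z) :
    FF s = FF s' := by
  ext j
  refine Fin.lastCases ?_ (fun i => ?_) j
  · rw [FF_last, FF_last, lam_periodic s s' h]
  · rw [FF_castSucc, FF_castSucc, lam_periodic s s' h]
    obtain ⟨z, hz⟩ := h i
    have : 2 * Real.pi * s i = 2 * Real.pi * s' i + z * (2 * Real.pi) := by rw [hz]; ring
    rw [this, Real.sin_add_int_mul_two_pi]

/-- Collapse map torus → sphere. -/
noncomputable def fS {m : ℕ} (s : Fin m → ℝ) : Sph m :=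
  ⟨‖FF s‖⁻¹ • FF s, by
    rw [mem_sphere_zero_iff_norm, norm_smul, norm_inv, norm_norm,
      inv_mul_cancel₀ (norm_ne_zero_iff.2 (FF_ne_zero s))]⟩

theorem continuous_fS {m : ℕ} : Continuous (fS (m := m)) := by
  unfold fS
  refine Continuous.subtype_mk ?_ _
  exact (continuous_FF.norm.inv₀ fun s => norm_ne_zero_iff.2 (FF_ne_zero s)).smul continuous_FF

theorem fS_neg {m : ℕ} (s : Fin m → ℝ) (j : Fin (m + 1)) : (fS s).1 j < 0 ↔ FF s j < 0 := by
  have h : 0 < ‖FF s‖⁻¹ := inv_pos.2 (norm_pos_iff.2 (FF_ne_zero s))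
  simp only [fS, PiLp.smul_apply, smul_eq_mul]
  constructor
  · intro h1
    by_contra h2
    exact absurd h1 (not_lt.2 (mul_nonneg h.le (not_lt.1 h2)))
  · intro h1
    exact mul_neg_of_pos_of_neg h h1

/-- The collapse map on the grid. -/
noncomputable def fK {m : ℕ} {K : ℕ} (q : Fin m → ZMod K) : Sph m :=
  fS fun i => ((q i).val : ℝ) / K

theorem fK_neg {m h : ℕ} (hh : 1 ≤ h) (q : Fin m → ZMod (2 * h)) (hq : ∀ i, q i ≠ 0) (i : Fin m) :
    (fK q).1 i.castSucc < 0 ↔ (q i).val < h := by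
  haveI : NeZero (2 * h) := ⟨by omega⟩
  have hhR : (0 : ℝ) < h := by exact_mod_cast hh
  have hpi := Real.pi_pos
  have hv : ∀ j, 0 < (q j).val := fun j => Nat.pos_of_ne_zero fun h0 =>
    hq j ((ZMod.val_eq_zero _).1 h0)
  have hlt : ∀ j, (q j).val < 2 * h := fun j => ZMod.val_lt _
  unfold fK
  rw [fS_neg, FF_castSucc]
  set s : Fin m → ℝ := fun i => ((q i).val : ℝ) / ((2 * h : ℕ) : ℝ) with hs
  have hlam : 0 < lam s := by
    unfold lam
    refine Finset.prod_pos fun j _ => ?_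
    apply pow_pos
    have hvR : (0 : ℝ) < (q j).val := by exact_mod_cast hv j
    have hltR : ((q j).val : ℝ) < ((2 * h : ℕ) : ℝ) := by exact_mod_cast hlt j
    have h0 : (0 : ℝ) < ((2 * h : ℕ) : ℝ) := hvR.trans hltR
    apply Real.sin_pos_of_pos_of_lt_pi
    · simp only [hs]; positivity
    · have : s j < 1 := by simp only [hs]; rw [div_lt_one h0]; exact hltR
      nlinarith
  have hang : 2 * Real.pi * s i = Real.pi * ((q i).val / h) := by
    simp only [hs]; push_cast; field_simp
  rw [hang, neg_lt_zero, mul_pos_iff_of_pos_left hlam]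
  have hvR : (0 : ℝ) < (q i).val := by exact_mod_cast hv i
  have hltR : ((q i).val : ℝ) < 2 * h := by exact_mod_cast hlt i
  constructor
  · intro h1
    by_contra h2
    have h3 : (h : ℝ) ≤ (q i).val := by exact_mod_cast not_lt.1 h2
    have h4 : 1 ≤ ((q i).val : ℝ) / h := by rw [le_div_iff₀ hhR]; linarith
    have h5 : ((q i).val : ℝ) / h < 2 := by rw [div_lt_iff₀ hhR]; linarith
    have h6 : 0 ≤ Real.sin (Real.pi * ((q i).val / h) - Real.pi) :=
      Real.sin_nonneg_of_nonneg_of_le_pi (by nlinarith) (by nlinarith)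
    rw [Real.sin_sub_pi] at h6
    linarith
  · intro h1
    have h3 : ((q i).val : ℝ) < h := by exact_mod_cast h1
    have h5 : ((q i).val : ℝ) / h < 1 := by rw [div_lt_iff₀ hhR]; linarith
    exact Real.sin_pos_of_pos_of_lt_pi (by positivity) (by nlinarith)

theorem fK_boundary {m K : ℕ} (q : Fin m → ZMod K) (i : Fin m) (hi : q i = 0) :
    col (fK q) = (Fin.last m).castSucc := by
  unfold fK
  set s : Fin m → ℝ := fun i => ((q i).val : ℝ) / (K : ℝ) with hs
  have hlam : lam s = 0 := by
    refine Finset.prod_eq_zero (Finset.mem_univ i) ?_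
    simp [hs, hi]
  apply col_eq_castSucc
  · rw [fS_neg, FF_last, hlam]; norm_num
  · intro j hj
    obtain ⟨j, rfl⟩ := Fin.exists_castSucc_eq.2 hj.ne
    rw [← not_lt, fS_neg, FF_castSucc, hlam]
    simp

theorem col_le {m : ℕ} (x : Sph m) (i : Fin (m + 1)) (h : x.1 i < 0) : col x ≤ i.castSucc := by
  rcases Fin.eq_castSucc_or_eq_last (col x) with ⟨k, hk⟩ | hk
  · rw [hk]
    by_contra hlt
    rw [not_le, Fin.castSucc_lt_castSucc_iff] at hlt
    exact absurd h (not_lt.2 ((col_castSucc x k hk).2 i hlt))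
  · exact absurd h (not_lt.2 (col_last x hk i))

theorem kap_castSucc {m : ℕ} (r : Fin m) : kap r.castSucc = r.castSucc.castSucc := by
  unfold kap
  rw [Fin.succAbove_of_castSucc_lt]
  simp [Fin.lt_def]

theorem kap_last {m : ℕ} : kap (Fin.last m) = Fin.last (m + 1) := by
  unfold kap
  rw [Fin.succAbove_of_le_castSucc]
  · simp
  · exact le_rfl

theorem val_step {K : ℕ} [NeZero K] (a : ZMod K) (h : a + 1 ≠ 0) : (a + 1).val = a.val + 1 := by
  rcases Nat.lt_or_ge (a.val + 1) K with h1 | h1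
  · have h2 : a + 1 = ((a.val + 1 : ℕ) : ZMod K) := by
      push_cast
      rw [ZMod.natCast_zmod_val]
    rw [h2, ZMod.val_natCast_of_lt h1]
  · exfalso
    apply h
    have h2 : a.val + 1 = K := le_antisymm (ZMod.val_lt a) h1
    have h3 : ((a.val + 1 : ℕ) : ZMod K) = 0 := by rw [h2]; simp
    rw [← h3]
    push_cast
    rw [ZMod.natCast_zmod_val]

theorem path_unique {m h : ℕ} (hh : 1 ≤ h) (q : Fin (m + 1) → Fin m → ZMod (2 * h))
    (hq : ∀ r : Fin m, q r.succ = q r.castSucc ∨ ∃ j, q r.succ = q r.castSucc + Pi.single j 1)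
    (hne : om m (List.ofFn fun r => fK (q r)) ≠ 0) :
    (∀ r : Fin m, q r.succ = q r.castSucc + Pi.single r 1) ∧
      ∀ r, q 0 r = ((h - 1 : ℕ) : ZMod (2 * h)) := by
  haveI : NeZero (2 * h) := ⟨by omega⟩
  obtain ⟨c, hc, hcol⟩ := om_ne_zero _ hne
  have hq0 : ∀ r j, q r j ≠ 0 := by
    intro r j h0
    have := hcol r
    rw [fK_boundary _ j h0] at this
    exact Fin.succAbove_ne _ _ this.symm
  have hneg := fun r => fK_neg hh (q r) (hq0 r)
  have hstep : ∀ (r : Fin m) (j : Fin m), (q r.castSucc j).val ≤ (q r.succ j).val := by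
    intro r j
    rcases hq r with h1 | ⟨i, h1⟩
    · rw [h1]
    · by_cases hij : j = i
      · subst hij
        have h2 : q r.succ j = q r.castSucc j + 1 := by rw [h1]; simp
        rw [h2, val_step _ (by rw [← h2]; exact hq0 _ _)]
        omega
      · rw [h1]; simp [hij]
  have hmonoV : ∀ j, Monotone fun r => (q r j).val := fun j =>
    Fin.monotone_iff_le_succ.2 fun r => hstep r j
  have hkapm : StrictMono (kap (m := m)) := Fin.strictMono_succAbove _
  have hcm : Monotone c := by
    intro r r' hr
    rw [← hkapm.le_iff_le, ← hcol, ← hcol]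
    rcases Fin.eq_castSucc_or_eq_last (col (fK (q r'))) with ⟨k, hk⟩ | hk
    · have hkl : k ≠ Fin.last m := by
        rintro rfl
        rw [hcol r'] at hk
        exact Fin.succAbove_ne _ _ hk
      obtain ⟨k, rfl⟩ := Fin.exists_castSucc_eq.2 hkl
      have h1 := (col_castSucc _ _ hk).1
      rw [hneg] at h1
      rw [hk]
      apply col_le
      rw [hneg]
      exact lt_of_le_of_lt (hmonoV k hr) h1
    · rw [hk]; exact Fin.le_last _
  have hcs : StrictMono c := hcm.strictMono_of_injective hc
  have hcid : ∀ r, c r = r := fun r => le_antisymm hcs.apply_le hcs.le_apply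
  have hlow : ∀ r : Fin m, (q r.castSucc r).val < h := by
    intro r
    have h1 := hcol r.castSucc
    rw [hcid, kap_castSucc] at h1
    rw [← hneg]
    exact (col_castSucc _ _ h1).1
  have hhigh : ∀ r : Fin m, h ≤ (q r.succ r).val := by
    intro r
    by_contra h1
    rw [not_le, ← hneg] at h1
    have h2 := col_le _ _ h1
    rw [hcol, hcid, ← kap_castSucc, hkapm.le_iff_le] at h2
    exact absurd h2 (not_le.2 Fin.castSucc_lt_succ)
  have hmain : ∀ r : Fin m, q r.succ = q r.castSucc + Pi.single r 1 := by
    intro r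
    have h1 := hlow r
    have h2 := hhigh r
    rcases hq r with h3 | ⟨i, h3⟩
    · rw [h3] at h2; omega
    · by_cases hij : r = i
      · rw [h3, ← hij]
      · rw [h3] at h2; simp [hij] at h2; omega
  refine ⟨hmain, ?_⟩
  intro r
  have hconst : ∀ k : Fin (m + 1), k ≤ r.castSucc → q k r = q 0 r := by
    intro k
    induction k using Fin.induction with
    | zero => simp
    | succ k ih =>
      intro hk
      have hkr : k < r := by rwa [Fin.succ_le_castSucc_iff] at hk
      rw [hmain]
      simp only [Pi.add_apply]
      rw [Pi.single_eq_of_ne hkr.ne', add_zero]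
      exact ih (by simpa using hkr.le)
  rw [← hconst _ le_rfl]
  have h1 := hlow r
  have h2 := hhigh r
  have h3 : q r.succ r = q r.castSucc r + 1 := by rw [hmain]; simp
  rw [h3, val_step _ (by rw [← h3]; exact hq0 _ _)] at h2
  have h4 : (q r.castSucc r).val = h - 1 := by omega
  rw [← h4, ZMod.natCast_zmod_val]

theorem path_value {m h : ℕ} (hh : 2 ≤ h) (q : Fin (m + 1) → Fin m → ZMod (2 * h))
    (hq : ∀ k j, q k j = ((h - 1 : ℕ) : ZMod (2 * h)) + if (j : ℕ) < (k : ℕ) then 1 else 0) :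
    om m (List.ofFn fun r => fK (q r)) = 1 := by
  haveI : NeZero (2 * h) := ⟨by omega⟩
  have hv : ∀ k j, (q k j).val = if (j : ℕ) < (k : ℕ) then h else h - 1 := by
    intro k j
    rw [hq]
    split_ifs
    · have : ((h - 1 : ℕ) : ZMod (2 * h)) + 1 = ((h : ℕ) : ZMod (2 * h)) := by
        have h3 : ((h - 1 : ℕ) : ZMod (2 * h)) + 1 = ((h - 1 + 1 : ℕ) : ZMod (2 * h)) := by
          rw [Nat.cast_add, Nat.cast_one]
        rw [h3, Nat.sub_add_cancel (by omega)]
      rw [this, ZMod.val_natCast_of_lt (by omega)]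
    · rw [add_zero, ZMod.val_natCast_of_lt (by omega)]
  have hq0 : ∀ k j, q k j ≠ 0 := by
    intro k j h0
    have := hv k j
    rw [h0, ZMod.val_zero] at this
    split_ifs at this <;> omega
  have hneg := fun r => fK_neg (by omega : 1 ≤ h) (q r) (hq0 r)
  apply om_one
  intro k
  refine Fin.lastCases ?_ (fun r => ?_) k
  · rw [kap_last]
    apply col_eq_last
    intro i
    refine Fin.lastCases ?_ (fun i => ?_) i
    · rw [← not_lt]
      unfold fK
      rw [fS_neg, FF_last]
      have : lam (fun i => ((q (Fin.last m) i).val : ℝ) / ((2 * h : ℕ) : ℝ)) = 1 := by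
        unfold lam
        apply Finset.prod_eq_one
        intro i _
        have hhR : (h : ℝ) ≠ 0 := by
          have : h ≠ 0 := by omega
          exact_mod_cast this
        have e : Real.pi * (((q (Fin.last m) i).val : ℝ) / ((2 * h : ℕ) : ℝ)) = Real.pi / 2 := by
          rw [hv]
          simp only [Fin.val_last, i.2, if_true]
          push_cast
          field_simp
        rw [e, Real.sin_pi_div_two]
        norm_num
      rw [this]
      norm_num
    · rw [← not_lt, hneg, hv]
      simp
  · rw [kap_castSucc]
    apply col_eq_castSucc
    · rw [hneg, hv]
      simp
      omega
    · intro j hj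
      obtain ⟨j, rfl⟩ := Fin.exists_castSucc_eq.2 (ne_of_lt (lt_of_lt_of_le hj (Fin.le_last _)))
      rw [← not_lt, hneg, hv]
      have : (j : ℕ) < r := Fin.lt_def.1 hj
      simp [this]

theorem fK_key {m K : ℕ} [NeZero K] (hK0 : (0 : ℝ) < K) (q : Fin m → ZMod K)
    (a : Fin m → Prop) [DecidablePred a] : (fK fun i => q i + if a i then 1 else 0)
      = fS (fun i => ((q i).val + (if a i then 1 else 0) : ℝ) / K) := by
  unfold fK
  have : FF (fun i => ((q i + if a i then 1 else 0).val : ℝ) / K)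
    = FF (fun i => ((q i).val + (if a i then 1 else 0) : ℝ) / K) := by
    apply FF_periodic
    intro i
    split_ifs
    · by_cases h0 : q i + 1 = 0
      · refine ⟨-1, ?_⟩
        have h1 : (q i).val + 1 = K := by
          have h2 : (((q i).val + 1 : ℕ) : ZMod K) = 0 := by
            push_cast
            rw [ZMod.natCast_zmod_val, h0]
          rw [ZMod.natCast_eq_zero_iff] at h2
          have h3 := ZMod.val_lt (q i)
          have h4 := Nat.le_of_dvd (by omega) h2
          omega
        rw [h0]
        have h1R : ((q i).val : ℝ) + 1 = K := by exact_mod_cast h1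
        rw [h1R, div_self hK0.ne']
        simp
      · refine ⟨0, ?_⟩
        rw [val_step _ h0]
        simp
    · exact ⟨0, by simp⟩
  unfold fS
  ext1
  simp only [this]

theorem fK_close (m : ℕ) (ε : ℝ) (hε : 0 < ε) : ∃ h : ℕ, 2 ≤ h ∧
    ∀ (q : Fin m → ZMod (2 * h)) (a b : Fin m → Prop) [DecidablePred a] [DecidablePred b],
      dist (fK fun i => q i + if a i then 1 else 0) (fK fun i => q i + if b i then 1 else 0) < ε := by
  have hc : IsCompact (Set.pi Set.univ fun _ : Fin m => Set.Icc (0 : ℝ) 2) :=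
    isCompact_univ_pi fun _ => isCompact_Icc
  have hu := hc.uniformContinuousOn_of_continuous (continuous_fS (m := m)).continuousOn
  rw [Metric.uniformContinuousOn_iff] at hu
  obtain ⟨δ, hδ, hu⟩ := hu ε hε
  obtain ⟨M, hM⟩ := exists_nat_one_div_lt hδ
  refine ⟨M + 2, by omega, ?_⟩
  intro q a b _ _
  revert q
  obtain ⟨K, hK⟩ : ∃ K, K = 2 * (M + 2) := ⟨_, rfl⟩
  rw [← hK]
  intro q
  haveI : NeZero K := ⟨by omega⟩
  have hK0 : (0 : ℝ) < K := by
    have : 0 < K := by omega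
    exact_mod_cast this
  have hK1 : (1 : ℝ) ≤ K := by
    have : 1 ≤ K := by omega
    exact_mod_cast this
  rw [fK_key hK0, fK_key hK0]
  have hmem : ∀ (a : Fin m → Prop) [DecidablePred a],
      (fun i => ((q i).val + (if a i then 1 else 0) : ℝ) / K) ∈
        Set.pi Set.univ fun _ : Fin m => Set.Icc (0 : ℝ) 2 := by
    intro a _ i _
    have h1 : ((q i).val : ℝ) ≤ K := by exact_mod_cast (ZMod.val_lt (q i)).le
    have h2 : (0 : ℝ) ≤ (q i).val := Nat.cast_nonneg _
    constructor
    · positivity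
    · simp only
      rw [div_le_iff₀ hK0]
      split_ifs <;> linarith
  apply hu _ (hmem a) _ (hmem b)
  rw [dist_pi_lt_iff hδ]
  intro i
  rw [Real.dist_eq, ← sub_div, abs_div, abs_of_pos hK0]
  refine lt_of_le_of_lt ?_ hM
  have hMK : (M : ℝ) + 1 ≤ K := by
    have : M + 1 ≤ K := by omega
    exact_mod_cast this
  gcongr
  split_ifs <;> simp

end ASC

namespace ASC

theorem ev_dl' {N : ℕ} {ι : Type*} [DecidableEq ι] [Fintype ι] {K : ℕ} [NeZero K]
    (hN : 1 ≤ N) (e : Fin N ≃ ι) (ψ : List (ι → ZMod K) → ℤ) : ev e (dl ψ) = 0 := by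
  cases N with
  | zero => omega
  | succ N => exact ev_dl e ψ

theorem ofFn_eq_range {X : Type*} (w : ℕ → X) (N : ℕ) :
    (List.ofFn fun k : Fin N => w k) = (List.range N).map w := by
  apply List.ext_getElem
  · simp
  · intro i h1 h2
    simp

theorem cupAll_range {X : Type*} (m : ℕ) : ∀ (n : ℕ) (φ : Fin n → List X → ℤ) (w : ℕ → X),
    cupAll m (List.ofFn φ) ((List.range (n * m + 1)).map w) =
      ∏ i : Fin n, φ i (List.ofFn fun r : Fin (m + 1) => w (i * m + r))
  | 0, φ, w => by simp [cupAll]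
  | n + 1, φ, w => by
    rw [List.ofFn_succ, cupAll, cup, Fin.prod_univ_succ]
    congr 1
    · congr 1
      have := ofFn_eq_range w (m + 1)
      simp only [Fin.val_zero, zero_mul, zero_add]
      rw [this, ← List.map_take, List.take_range]
      congr 2
      rw [Nat.min_eq_left]
      nlinarith
    · have h1 : (((List.range ((n + 1) * m + 1)).map w).drop m) =
          (List.range (n * m + 1)).map (fun k => w (m + k)) := by
        apply List.ext_getElem
        · simp
          rw [add_mul, one_mul]
          omega
        · intro i h1 h2
          simp
      rw [h1, cupAll_range m n (fun i => φ i.succ) (fun k => w (m + k))]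
      refine Finset.prod_congr rfl fun i _ => ?_
      congr 1
      congr 1
      funext r
      congr 1
      simp only [Fin.val_succ]
      ring

theorem vtx_succ {N : ℕ} {ι : Type*} [DecidableEq ι] {K : ℕ} (e : Fin N ≃ ι) (p : ι → ZMod K)
    (sgm : Equiv.Perm ι) (k : Fin N) :
    vtx e p sgm (k + 1) = vtx e p sgm k + Pi.single (sgm (e k)) 1 := by
  funext x
  rw [Pi.add_apply, vtx_apply, vtx_apply, add_assoc]
  congr 1
  by_cases hx : x = sgm (e k)
  · subst hx
    simp
  · rw [Pi.single_eq_of_ne hx, add_zero]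
    have : (e.symm (sgm.symm x) : ℕ) ≠ k := by
      intro h
      apply hx
      have := Fin.ext h
      rw [← this]
      simp
    have h2 : (e.symm (sgm.symm x) : ℕ) < k + 1 ↔ (e.symm (sgm.symm x) : ℕ) < k := by omega
    simp only [h2]

/-- Grid enumeration. -/
def eP (n m : ℕ) : Fin (n * m) ≃ Fin n × Fin m := finProdFinEquiv.symm

theorem eP_symm (n m : ℕ) (x : Fin n × Fin m) : ((eP n m).symm x : ℕ) = x.1 * m + x.2 := by
  simp [eP, finProdFinEquiv]
  ring

/-- The block product. -/
noncomputable def blk {n m h : ℕ} (c : Fin n → Fin n) (p : Fin n × Fin m → ZMod (2 * h))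
    (sgm : Equiv.Perm (Fin n × Fin m)) : ℤ :=
  ∏ i : Fin n, om m (List.ofFn fun r : Fin (m + 1) =>
    fK fun j => vtx (eP n m) p sgm (i * m + r) (c i, j))

theorem blk_ne_zero {n m h : ℕ} (hm : 1 ≤ m) (hh : 2 ≤ h) (c : Fin n → Fin n)
    (p : Fin n × Fin m → ZMod (2 * h)) (sgm : Equiv.Perm (Fin n × Fin m)) (hb : blk c p sgm ≠ 0) :
    (∀ i r, sgm (i, r) = (c i, r)) ∧ p = fun _ => ((h - 1 : ℕ) : ZMod (2 * h)) := by
  have hone : (1 : ZMod (2 * h)) ≠ 0 := by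
    haveI : Fact (1 < 2 * h) := ⟨by omega⟩
    exact one_ne_zero
  have hb' := fun i => Finset.prod_ne_zero_iff.1 hb i (Finset.mem_univ i)
  have hv : ∀ (i : Fin n) (r : Fin m), vtx (eP n m) p sgm (i * m + (r.succ : Fin (m + 1))) =
      vtx (eP n m) p sgm (i * m + (r.castSucc : Fin (m + 1))) + Pi.single (sgm (i, r)) 1 := by
    intro i r
    have h1 := vtx_succ (eP n m) p sgm ((eP n m).symm (i, r))
    rw [Equiv.apply_symm_apply, eP_symm] at h1
    exact h1
  have key := fun i : Fin n => path_unique (by omega : 1 ≤ h)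
    (fun (r : Fin (m + 1)) (j : Fin m) => vtx (eP n m) p sgm (i * m + r) (c i, j)) (by
      intro r
      by_cases hc : (sgm (i, r)).1 = c i
      · right
        refine ⟨(sgm (i, r)).2, ?_⟩
        funext j
        simp only [hv, Pi.add_apply]
        congr 1
        simp only [Pi.single_apply]
        congr 1
        rw [Prod.ext_iff]
        simp [hc.symm]
      · left
        funext j
        simp only [hv, Pi.add_apply]
        rw [Pi.single_eq_of_ne, add_zero]
        intro h1
        apply hc
        rw [← h1]) (hb' i)
  have hσ : ∀ i r, sgm (i, r) = (c i, r) := by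
    intro i r
    by_contra hne
    have h1 := congrFun ((key i).1 r) r
    simp only [hv, Pi.add_apply] at h1
    rw [Pi.single_eq_of_ne (Ne.symm hne)] at h1
    simp at h1
    exact hone h1
  refine ⟨hσ, ?_⟩
  have hc : Function.Surjective c := by
    intro x
    obtain ⟨⟨i, r⟩, hy⟩ := sgm.surjective (x, ⟨0, by omega⟩)
    rw [hσ] at hy
    exact ⟨i, (Prod.ext_iff.1 hy).1⟩
  funext x
  obtain ⟨x, r⟩ := x
  obtain ⟨i, rfl⟩ := hc x
  have h1 := (key i).2 r
  simp only [vtx_apply] at h1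
  have h2 : sgm.symm (c i, r) = (i, r) := by rw [← hσ, Equiv.symm_apply_apply]
  rw [h2, eP_symm] at h1
  simpa using h1

theorem sum_blk {n m h : ℕ} [NeZero (2 * h)] (hm : 1 ≤ m) (hme : Even m) (hh : 2 ≤ h)
    (c : Fin n → Fin n) [Decidable (Function.Bijective c)] :
    ∑ p : Fin n × Fin m → ZMod (2 * h), ∑ sgm : Equiv.Perm (Fin n × Fin m),
      ((Equiv.Perm.sign sgm : ℤˣ) : ℤ) * blk c p sgm = if Function.Bijective c then 1 else 0 := by
  split_ifs with hc
  · set τ : Equiv.Perm (Fin n) := Equiv.ofBijective c hc with hτ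
    set σ₀ : Equiv.Perm (Fin n × Fin m) := Equiv.prodCongr τ (Equiv.refl _) with hσ₀
    have hσv : ∀ i r, σ₀ (i, r) = (c i, r) := fun i r => rfl
    rw [Finset.sum_eq_single (fun _ => ((h - 1 : ℕ) : ZMod (2 * h))),
      Finset.sum_eq_single σ₀]
    · have h1 : blk c (fun _ => ((h - 1 : ℕ) : ZMod (2 * h))) σ₀ = 1 := by
        unfold blk
        apply Finset.prod_eq_one
        intro i _
        apply path_value hh
        intro k j
        rw [vtx_apply]
        have h2 : σ₀.symm (c i, j) = (i, j) := by rw [← hσv, Equiv.symm_apply_apply]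
        rw [h2, eP_symm]
        simp
      have h2 : Equiv.Perm.sign σ₀ = 1 := by
        have h3 : σ₀ = Equiv.prodCongrLeft (fun _ : Fin m => τ) := by
          ext x <;> simp [hσ₀]
        rw [h3, Equiv.Perm.sign_prodCongrLeft, Finset.prod_const, Finset.card_univ,
          Fintype.card_fin]
        obtain ⟨a, rfl⟩ := hme
        rw [← two_mul, pow_mul, Int.units_sq, one_pow]
      rw [h1, h2]
      simp
    · intro sgm _ hσ
      by_contra hne
      have := (blk_ne_zero hm hh c _ sgm (right_ne_zero_of_mul hne)).1
      apply hσ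
      ext1 ⟨i, r⟩
      rw [this, hσv]
    · simp
    · intro p _ hp
      apply Finset.sum_eq_zero
      intro sgm _
      by_contra hne
      exact hp (blk_ne_zero hm hh c _ sgm (right_ne_zero_of_mul hne)).2
    · simp
  · apply Finset.sum_eq_zero
    intro p _
    apply Finset.sum_eq_zero
    intro sgm _
    by_contra hne
    have := (blk_ne_zero hm hh c _ sgm (right_ne_zero_of_mul hne)).1
    apply hc
    apply Finite.surjective_iff_bijective.1
    intro x
    obtain ⟨⟨i, r⟩, hy⟩ := sgm.surjective (x, ⟨0, by omega⟩)
    rw [this] at hy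
    exact ⟨i, (Prod.ext_iff.1 hy).1⟩

/-- Second coordinate. -/
def bb {n : ℕ} (i : Fin (n + 2)) : Fin (n + 2) := if i = 0 then 1 else i

theorem bb_ne_zero {n : ℕ} (i : Fin (n + 2)) : bb i ≠ 0 := by
  unfold bb
  split_ifs with h
  · exact one_ne_zero
  · exact h

/-- Coefficients. -/
def cA {n : ℕ} (i c : Fin (n + 2)) : ℤ := (if c = bb i then 1 else 0) - (if c = 0 then 1 else 0)

theorem prod_cA_nonpos {n : ℕ} (c : Fin (n + 2) → Fin (n + 2)) (hc : Function.Bijective c) :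
    ∏ i, cA i (c i) ≤ 0 := by
  obtain ⟨i₀, hi₀⟩ := hc.2 0
  rw [← Finset.mul_prod_erase _ _ (Finset.mem_univ i₀)]
  have h1 : cA i₀ (c i₀) = -1 := by
    rw [hi₀, cA, if_neg (bb_ne_zero i₀).symm]
    simp
  have h2 : 0 ≤ ∏ i ∈ Finset.univ.erase i₀, cA i (c i) := by
    apply Finset.prod_nonneg
    intro i hi
    have : c i ≠ 0 := by
      rw [← hi₀]
      exact fun h => (Finset.mem_erase.1 hi).1 (hc.1 h)
    rw [cA, if_neg this]
    split_ifs <;> simp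
  rw [h1]
  linarith

theorem prod_cA_id {n : ℕ} : ∏ i : Fin (n + 2), cA i i = -1 := by
  rw [← Finset.mul_prod_erase _ _ (Finset.mem_univ 0)]
  have h1 : cA (0 : Fin (n + 2)) 0 = -1 := by
    rw [cA, if_neg (bb_ne_zero 0).symm]
    simp
  have h2 : ∏ i ∈ (Finset.univ : Finset (Fin (n + 2))).erase 0, cA i i = 1 := by
    apply Finset.prod_eq_one
    intro i hi
    have := (Finset.mem_erase.1 hi).1
    simp [cA, bb, this]
  rw [h1, h2]
  norm_num

/-- The zero divisor cochains. -/
noncomputable def alp (m n : ℕ) (i : Fin (n + 2)) (l : List (Fin (n + 2) → Sph m)) : ℤ :=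
  om m (l.map fun y => y (bb i)) - om m (l.map fun y => y 0)

theorem alp_eq (m n : ℕ) (i : Fin (n + 2)) (l : List (Fin (n + 2) → Sph m)) :
    alp m n i l = ∑ c, cA i c * om m (l.map fun y => y c) := by
  simp only [cA, sub_mul, Finset.sum_sub_distrib, ite_mul, one_mul, zero_mul, alp,
    Finset.sum_ite_eq', Finset.mem_univ, if_true]

/-- Grid to product of spheres. -/
noncomputable def gK {n m h : ℕ} (p : Fin n × Fin m → ZMod (2 * h)) : Fin n → Sph m :=
  fun i => fK fun j => p (i, j)

theorem ev_neg {n m h : ℕ} [NeZero (2 * h)] (hm : 1 ≤ m) (hme : Even m) (hh : 2 ≤ h) :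
    ev (K := 2 * h) (eP (n + 2) m)
      (fun l => cupAll m (List.ofFn (alp m n)) (l.map gK)) < 0 := by
  classical
  have h1 : ev (K := 2 * h) (eP (n + 2) m)
      (fun l => cupAll m (List.ofFn (alp m n)) (l.map gK)) =
      ∑ c : Fin (n + 2) → Fin (n + 2), (∏ i, cA i (c i)) *
        if Function.Bijective c then 1 else 0 := by
    simp only [← sum_blk hm hme hh]
    unfold ev
    simp only [Finset.mul_sum]
    rw [Finset.sum_comm (s := (Finset.univ : Finset (Fin (n + 2) → Fin (n + 2))))]
    refine Finset.sum_congr rfl fun p _ => ?_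
    rw [Finset.sum_comm (s := (Finset.univ : Finset (Fin (n + 2) → Fin (n + 2))))]
    refine Finset.sum_congr rfl fun sgm _ => ?_
    rw [ofFn_eq_range (fun k => vtx (eP (n + 2) m) p sgm k), List.map_map, cupAll_range]
    simp only [alp_eq]
    rw [Finset.prod_univ_sum, Finset.mul_sum]
    simp only [Fintype.piFinset_univ]
    refine Finset.sum_congr rfl fun c _ => ?_
    rw [Finset.prod_mul_distrib]
    have : (∏ i : Fin (n + 2), om m (List.map (fun y => y (c i)) (List.ofFn fun r : Fin (m + 1) =>
        ((gK ∘ fun k => vtx (eP (n + 2) m) p sgm k) (i * m + r) : Fin (n + 2) → Sph m))))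
        = blk c p sgm := by
      unfold blk
      refine Finset.prod_congr rfl fun i _ => ?_
      rw [List.map_ofFn]
      rfl
    rw [this]
    ring
  rw [h1]
  have h2 : ∀ c ∈ (Finset.univ : Finset (Fin (n + 2) → Fin (n + 2))), (∏ i, cA i (c i)) *
        (if Function.Bijective c then 1 else 0) ≤ 0 := by
    intro c _
    split_ifs with hc
    · simpa using prod_cA_nonpos c hc
    · simp
  refine Finset.sum_neg' h2 ⟨id, Finset.mem_univ _, ?_⟩
  rw [if_pos Function.bijective_id]
  simp [prod_cA_id]

end ASC

namespace ASC

theorem Small.mono {X : Type*} [PseudoMetricSpace X] {ε ε' : ℝ} {l : List X}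
    (h : ε ≤ ε') (hl : Small ε l) : Small ε' l :=
  fun a ha b hb => (hl a ha b hb).trans_le h

theorem Small.coord {ι : Type*} [Fintype ι] {X : Type*} [PseudoMetricSpace X] {ε : ℝ}
    {l : List (ι → X)} (hl : Small ε l) (c : ι) : Small ε (l.map fun y => y c) := by
  intro a ha b hb
  rw [List.mem_map] at ha hb
  obtain ⟨a, ha, rfl⟩ := ha
  obtain ⟨b, hb, rfl⟩ := hb
  exact (dist_le_pi_dist a b c).trans_lt (hl a ha b hb)

theorem alp_cocycle (m n : ℕ) (i : Fin (n + 2)) (l : List (Fin (n + 2) → Sph m))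
    (hl : l.length = m + 2) (hs : Small (1 / (m + 1)) l) : dl (alp m n i) l = 0 := by
  unfold alp
  rw [dl_sub l (fun l => om m (l.map fun y => y (bb i))) (fun l => om m (l.map fun y => y 0)),
    dl_map, dl_map, om_cocycle, om_cocycle, sub_self]
  · simpa using hl
  · exact hs.coord 0
  · simpa using hl
  · exact hs.coord _

/-- Planner predicate. -/
def Pln (m n : ℕ) (V : Set (Fin n → Sph m)) : Prop :=
  ∃ s : C(V, C(unitInterval, Sph m)), ∀ x : V, ∀ j : Fin n, s x (evalPt n j) = (x : Fin n → Sph m) j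

theorem alp_exact (m n : ℕ) (V S : Set (Fin (n + 2) → Sph m)) (hV : Pln m (n + 2) V)
    (hS : IsCompact S) (hSV : S ⊆ V) (i : Fin (n + 2)) :
    ∃ ε > 0, ∃ η : List (Fin (n + 2) → Sph m) → ℤ, ∀ l : List (Fin (n + 2) → Sph m),
      l.length = m + 1 → (∀ a ∈ l, a ∈ S) → Small ε l → alp m n i l = dl η l := by
  classical
  obtain ⟨s, hs⟩ := hV
  set τ : ℝ := (evalPt (n + 2) (bb i) : ℝ) with hτ
  let H : (Fin (n + 2) → Sph m) → ℝ → Sph m := fun y t =>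
    if h : y ∈ V then s ⟨y, h⟩ (Set.projIcc 0 1 zero_le_one (τ * t)) else y 0
  obtain ⟨ε, hε, η, h⟩ := homotopy_exact S hS H (by
    rw [continuousOn_iff_continuous_domRestrict]
    have : (S ×ˢ Set.Icc (0 : ℝ) 1).domRestrict (fun q => H q.1 q.2) =
        fun q : (S ×ˢ Set.Icc (0 : ℝ) 1 : Set _) => s ⟨q.1.1, hSV q.2.1⟩
          (Set.projIcc 0 1 zero_le_one (τ * q.1.2)) := by
      funext q
      exact dif_pos (hSV q.2.1)
    rw [this]
    have h1 : Continuous fun q : (S ×ˢ Set.Icc (0 : ℝ) 1 : Set ((Fin (n + 2) → Sph m) × ℝ)) =>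
        (⟨q.1.1, hSV q.2.1⟩ : V) := by
      refine Continuous.subtype_mk ?_ _
      fun_prop
    have h2 : Continuous fun q : (S ×ˢ Set.Icc (0 : ℝ) 1 : Set ((Fin (n + 2) → Sph m) × ℝ)) =>
        (Set.projIcc (0 : ℝ) 1 zero_le_one (τ * q.1.2)) :=
      continuous_projIcc.comp (by fun_prop)
    exact (s.continuous.comp h1).eval h2)
  refine ⟨ε, hε, η, ?_⟩
  intro l hl hlS hsm
  rw [← h l hl hlS hsm]
  unfold alp
  congr 2
  · apply List.map_congr_left
    intro y hy
    simp only [H]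
    rw [dif_pos (hSV (hlS y hy)), mul_one, hτ, Set.projIcc_val, hs]
  · apply List.map_congr_left
    intro y hy
    simp only [H]
    rw [dif_pos (hSV (hlS y hy)), mul_zero]
    have h0 : Set.projIcc (0 : ℝ) 1 zero_le_one 0 = evalPt (n + 2) 0 := by
      rw [Set.projIcc_left]
      ext
      simp [evalPt]
    rw [h0, hs]

theorem gK_small {n m h : ℕ} {ε : ℝ} (hε : 0 < ε)
    (hcl : ∀ (q : Fin m → ZMod (2 * h)) (a b : Fin m → Prop) [DecidablePred a] [DecidablePred b],
      dist (fK fun i => q i + if a i then 1 else 0) (fK fun i => q i + if b i then 1 else 0) < ε)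
    (p : Fin n × Fin m → ZMod (2 * h)) (sgm : Equiv.Perm (Fin n × Fin m)) (N : ℕ) :
    Small ε ((List.ofFn fun k : Fin N => vtx (eP n m) p sgm k).map gK) := by
  intro a ha b hb
  rw [List.map_ofFn, List.mem_ofFn] at ha hb
  obtain ⟨k, rfl⟩ := ha
  obtain ⟨k', rfl⟩ := hb
  rw [dist_pi_lt_iff hε]
  intro i
  simp only [Function.comp, gK, vtx_apply]
  exact hcl _ _ _

theorem lower (m n : ℕ) (hm : 1 ≤ m) (hme : Even m) (U : Fin (n + 2) → Set (Fin (n + 2) → Sph m))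
    (hU : ∀ i, IsOpen (U i)) (hcov : ⋃ i, U i = Set.univ) (hp : ∀ i, Pln m (n + 2) (U i)) :
    False := by
  obtain ⟨V, hVcov, hVo, hVU⟩ := exists_iUnion_eq_closure_subset hU
    (fun x => Set.toFinite _) hcov
  have hex := fun i => alp_exact m n (U i) (closure (V i)) (hp i) isClosed_closure.isCompact
    (hVU i) i
  choose ε hε η hη using hex
  obtain ⟨δ, hδ, hleb⟩ := lebesgue_number_lemma_of_metric (isCompact_univ (X := Fin (n + 2) → Sph m))
    hVo (by rw [hVcov])
  obtain ⟨ε₀, hε₀, hε₀le⟩ : ∃ ε₀ > 0, ∀ i, ε₀ ≤ ε i := by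
    refine ⟨Finset.univ.inf' Finset.univ_nonempty ε, ?_, fun i => Finset.inf'_le _ (Finset.mem_univ i)⟩
    rw [gt_iff_lt, Finset.lt_inf'_iff]
    exact fun i _ => hε i
  have hm1 : (0 : ℝ) < 1 / (m + 1) := by positivity
  obtain ⟨r, hr, hr1, hr2, hr3⟩ : ∃ r : ℝ, 0 < r ∧ r ≤ ε₀ ∧ r ≤ δ ∧ r ≤ 1 / (m + 1) :=
    ⟨min ε₀ (min δ (1 / (m + 1))), by positivity, min_le_left _ _,
      (min_le_right _ _).trans (min_le_left _ _), (min_le_right _ _).trans (min_le_right _ _)⟩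
  obtain ⟨-, ψ, -, hψ⟩ := tele (Small r) (fun l l' h hl => hl.sublist h) m hm
    (List.ofFn fun i => (alp m n i, η i)) (by
      intro a ha l hl hlen
      rw [List.mem_ofFn] at ha
      obtain ⟨i, rfl⟩ := ha
      exact alp_cocycle m n i l hlen (hl.mono hr3))
  have hψ' : ∀ l : List (Fin (n + 2) → Sph m), Small r l → l.length = (n + 2) * m + 1 →
      cupAll m (List.ofFn (alp m n)) l = dl ψ l := by
    intro l hl hlen
    rw [← hψ l hl (by rw [hlen, List.length_ofFn])]
    have hfst : List.map Prod.fst (List.ofFn fun i => (alp m n i, η i)) = List.ofFn (alp m n) := by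
      rw [List.map_ofFn]
      rfl
    rw [hfst, eq_comm, sub_eq_self]
    apply cupAll_eq_zero
    · rw [List.length_map, List.length_ofFn, hlen]
    · have hne : l ≠ [] := by
        rintro rfl
        simp at hlen
      obtain ⟨i, hi⟩ := hleb (l.head hne) (Set.mem_univ _)
      refine ⟨fun l => alp m n i l - dl (η i) l, ?_, ?_⟩
      · rw [List.map_ofFn, List.mem_ofFn]
        exact ⟨i, rfl⟩
      · intro l' hl' hlen'
        rw [sub_eq_zero]
        apply hη i l' hlen'
        · intro a ha
          apply subset_closure
          apply hi
          rw [Metric.mem_ball]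
          exact (hl a (hl'.subset ha) _ (List.head_mem hne)).trans_le hr2
        · exact (hl.sublist hl').mono (hr1.trans (hε₀le i))
  obtain ⟨h, hh, hcl⟩ := fK_close m r hr
  haveI : NeZero (2 * h) := ⟨by omega⟩
  have h1 := ev_neg (n := n) (h := h) hm hme hh
  have h2 : ev (K := 2 * h) (eP (n + 2) m)
      (fun l => cupAll m (List.ofFn (alp m n)) (l.map gK)) =
      ev (K := 2 * h) (eP (n + 2) m) (dl fun l => ψ (l.map gK)) := by
    unfold ev
    refine Finset.sum_congr rfl fun p _ => Finset.sum_congr rfl fun sgm _ => ?_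
    rw [dl_map]
    dsimp only
    rw [hψ']
    · exact gK_small hr hcl p sgm _
    · simp
  rw [h2, ev_dl' (by nlinarith)] at h1
  exact lt_irrefl _ h1

theorem lower' (m n k : ℕ) (hm : 1 ≤ m) (hme : Even m) (hn : 2 ≤ n)
    (h : HasBidirPlanners (Sph m) n k) : n + 1 ≤ k := by
  by_contra hk
  have hk : k ≤ n := by omega
  obtain ⟨n, rfl⟩ : ∃ a, n = a + 2 := ⟨n - 2, by omega⟩
  obtain ⟨U, hU, hcov, -, hs⟩ := h
  refine lower m n hm hme (fun i => if hi : (i : ℕ) < k then U ⟨i, hi⟩ else ∅) ?_ ?_ ?_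
  · intro i
    split_ifs
    · exact hU _
    · exact isOpen_empty
  · rw [Set.eq_univ_iff_forall] at hcov ⊢
    intro x
    obtain ⟨i, hi⟩ := Set.mem_iUnion.1 (hcov x)
    refine Set.mem_iUnion.2 ⟨⟨i, lt_of_lt_of_le i.2 hk⟩, ?_⟩
    simp only [i.2, dif_pos]
    exact hi
  · intro i
    split_ifs
    · obtain ⟨s, h1, -⟩ := hs ⟨i, by assumption⟩
      exact ⟨s, h1⟩
    · exact ⟨⟨fun x => x.2.elim, continuous_of_discreteTopology⟩, fun x => x.2.elim⟩

end ASC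

namespace ASC

theorem card_lemma {k : ℕ} (P P' : Finset (Fin (k + 1))) (A A' : Finset (Fin k)) (hP : P ⊆ P')
    (hA : ∀ j ∈ A, j ∉ A' → (j.castSucc ∈ P' ∧ j.castSucc ∉ P) ∧ (j.succ ∈ P' ∧ j.succ ∉ P)) :
    (P = P' ∧ A = A') ∨ P.card + A.card < P'.card + A'.card := by
  classical
  have hPc : P'.card = P.card + (P' \ P).card := by
    rw [Finset.card_sdiff_of_subset hP]
    have := Finset.card_le_card hP
    omega
  have hAc : A.card = (A ∩ A').card + (A \ A').card := by
    rw [Finset.card_inter_add_card_sdiff]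
  have hA'c : (A ∩ A').card ≤ A'.card := Finset.card_le_card Finset.inter_subset_right
  rcases Finset.eq_empty_or_nonempty (A \ A') with hB | hB
  · have hAA : A ⊆ A' := Finset.sdiff_eq_empty_iff_subset.1 hB
    have h1 := Finset.card_le_card hP
    have h2 := Finset.card_le_card hAA
    rcases lt_or_ge (P.card + A.card) (P'.card + A'.card) with h | h
    · exact Or.inr h
    · left
      exact ⟨Finset.eq_of_subset_of_card_le hP (by omega),
        Finset.eq_of_subset_of_card_le hAA (by omega)⟩
  · right
    have h1 : insert ((A \ A').min' hB).castSucc ((A \ A').image Fin.succ) ⊆ P' \ P := by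
      intro x hx
      rw [Finset.mem_insert, Finset.mem_image] at hx
      rw [Finset.mem_sdiff]
      rcases hx with rfl | ⟨j, hj, rfl⟩
      · have := Finset.mem_sdiff.1 (Finset.min'_mem _ hB)
        exact (hA _ this.1 this.2).1
      · have := Finset.mem_sdiff.1 hj
        exact (hA _ this.1 this.2).2
    have h2 := Finset.card_le_card h1
    rw [Finset.card_insert_of_notMem, Finset.card_image_of_injective _ (Fin.succ_injective _)] at h2
    · omega
    · intro h
      obtain ⟨j, hj, h⟩ := Finset.mem_image.1 h
      have h3 := Finset.min'_le _ _ hj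
      have h4 : (j : ℕ) + 1 = ((A \ A').min' hB : ℕ) := by
        have := congrArg Fin.val h
        simpa using this
      have h5 : ((A \ A').min' hB : ℕ) ≤ j := h3
      omega

/-- Labels. -/
abbrev Lab (k : ℕ) : Type := (Fin (k + 1) → SignType) × (Fin k → Bool)

/-- Weight. -/
def wt {k : ℕ} (l : Lab k) : ℕ :=
  (Finset.univ.filter fun j => l.1 j ≠ 0).card + (Finset.univ.filter fun j => l.2 j = true).card

/-- Reversal of labels. -/
def rlab {k : ℕ} (l : Lab k) : Lab k := (fun j => l.1 j.rev, fun j => l.2 j.rev)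

theorem rlab_rlab {k : ℕ} (l : Lab k) : rlab (rlab l) = l := by
  simp [rlab]

theorem wt_rlab {k : ℕ} (l : Lab k) : wt (rlab l) = wt l := by
  unfold wt rlab
  congr 1
  · refine Finset.card_bij (fun j _ => j.rev) ?_ ?_ ?_
    · intro j hj; simpa using hj
    · intro a _ b _ h; simpa using h
    · intro b hb; exact ⟨b.rev, by simpa using hb, by simp⟩
  · refine Finset.card_bij (fun j _ => j.rev) ?_ ?_ ?_
    · intro j hj; simpa using hj
    · intro a _ b _ h; simpa using h
    · intro b hb; exact ⟨b.rev, by simpa using hb, by simp⟩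

section
variable {m k : ℕ}

open Classical in
/-- Pole sign. -/
noncomputable def psg (N : Sph m) (x : Sph m) : SignType :=
  if x = N then 1 else if x = -N then -1 else 0

theorem ne_neg_self (x : Sph m) : x ≠ -x := by
  intro h
  have h1 : (x : EuclideanSpace ℝ (Fin (m + 1))) = -(x : EuclideanSpace ℝ (Fin (m + 1))) :=
    congrArg Subtype.val h
  have h2 : (x : EuclideanSpace ℝ (Fin (m + 1))) = 0 := by
    rw [eq_neg_iff_add_eq_zero, ← two_smul ℝ, smul_eq_zero] at h1
    exact h1.resolve_left two_ne_zero
  have h3 := x.2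
  rw [h2] at h3
  simp at h3

theorem psg_one (N x : Sph m) : psg N x = 1 ↔ x = N := by
  unfold psg
  split_ifs with h1 h2 <;> simp [h1]

theorem psg_neg_one (N x : Sph m) : psg N x = -1 ↔ x = -N := by
  unfold psg
  split_ifs with h1 h2
  · subst h1
    simp [ne_neg_self]
  · simp [h2]
  · simp [h2]

theorem psg_neg (N x : Sph m) : psg N (-x) = -psg N x := by
  rcases h : psg N x with _ | _ | _
  · by_contra h1
    have : psg N (-x) = 1 ∨ psg N (-x) = -1 := by
      rcases h2 : psg N (-x) with _ | _ | _
      · exact absurd h2 h1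
      · right; rfl
      · left; rfl
    rcases this with h2 | h2
    · rw [psg_one] at h2
      have : psg N x = -1 := by rw [psg_neg_one, ← h2, neg_neg]
      rw [h] at this
      exact absurd this (by decide)
    · rw [psg_neg_one] at h2
      have : psg N x = 1 := by rw [psg_one]; exact neg_injective h2
      rw [h] at this
      exact absurd this (by decide)
  · have h2 := (psg_neg_one N x).1 h
    rw [show -(SignType.neg) = (1 : SignType) from rfl, psg_one, h2, neg_neg]
  · have h2 := (psg_one N x).1 h
    rw [show -(SignType.pos) = (-1 : SignType) from rfl, psg_neg_one, h2]

open Classical in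
/-- Label of a configuration. -/
noncomputable def lab (N : Sph m) (y : Fin (k + 1) → Sph m) : Lab k :=
  (fun j => psg N (y j),
    fun j => decide (y j.succ = -y j.castSucc ∧ psg N (y j.castSucc) = 0))

theorem lab_rtuple (N : Sph m) (y : Fin (k + 1) → Sph m) :
    lab N (rtuple y) = rlab (lab N y) := by
  unfold lab rlab rtuple
  ext1
  · rfl
  · funext j
    simp only [Fin.rev_castSucc, Fin.rev_succ]
    apply decide_eq_decide.2
    constructor
    · rintro ⟨h1, h2⟩
      refine ⟨by rw [h1, neg_neg], ?_⟩
      rw [h1, psg_neg, h2]; rfl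
    · rintro ⟨h1, h2⟩
      refine ⟨by rw [h1, neg_neg], ?_⟩
      rw [h1, psg_neg, h2]; rfl

theorem lab_snd (N : Sph m) (y : Fin (k + 1) → Sph m) (j : Fin k) :
    (lab N y).2 j = true ↔ y j.succ = -y j.castSucc ∧ psg N (y j.castSucc) = 0 := by
  simp [lab]

theorem wt_lab_le (N : Sph m) (y : Fin (k + 1) → Sph m) : wt (lab N y) ≤ k + 1 := by
  unfold wt
  rw [← Finset.card_image_of_injective _ (Fin.succ_injective k), ← Finset.card_union_of_disjoint]
  · exact (Finset.card_le_univ _).trans (by simp)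
  · rw [Finset.disjoint_left]
    intro x hx hx'
    obtain ⟨j, hj, rfl⟩ := Finset.mem_image.1 hx'
    rw [Finset.mem_filter, lab_snd] at hj
    rw [Finset.mem_filter] at hx
    apply hx.2
    change psg N (y j.succ) = 0
    rw [hj.2.1, psg_neg, hj.2.2]
    rfl

theorem closure_lab (N : Sph m) (l : Lab k) (y : Fin (k + 1) → Sph m)
    (hy : y ∈ closure {z | lab N z = l}) : lab N y = l ∨ wt l < wt (lab N y) := by
  rcases Set.eq_empty_or_nonempty {z : Fin (k + 1) → Sph m | lab N z = l} with h0 | ⟨z₀, hz₀⟩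
  · rw [h0, closure_empty] at hy
    exact hy.elim
  have hs : ∀ j, l.1 j ≠ 0 → psg N (y j) = l.1 j := by
    intro j hj
    rcases h : l.1 j with _ | _ | _
    · exact absurd h hj
    · refine (psg_neg_one N _).2 ?_
      have hc : IsClosed {z : Fin (k + 1) → Sph m | z j = -N} :=
        isClosed_eq (continuous_apply j) continuous_const
      refine closure_minimal ?_ hc hy
      rintro z rfl
      exact (psg_neg_one N _).1 h
    · refine (psg_one N _).2 ?_
      have hc : IsClosed {z : Fin (k + 1) → Sph m | z j = N} :=
        isClosed_eq (continuous_apply j) continuous_const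
      refine closure_minimal ?_ hc hy
      rintro z rfl
      exact (psg_one N _).1 h
  have hA : ∀ j, l.2 j = true → y j.succ = -y j.castSucc := by
    intro j hj
    have hc : IsClosed {z : Fin (k + 1) → Sph m | z j.succ = -z j.castSucc} :=
      isClosed_eq (continuous_apply _) (continuous_apply j.castSucc).neg
    refine closure_minimal ?_ hc hy
    rintro z rfl
    exact ((lab_snd N z j).1 hj).1
  have hA0 : ∀ j, l.2 j = true → l.1 j.castSucc = 0 ∧ l.1 j.succ = 0 := by
    intro j hj
    have hz : lab N z₀ = l := hz₀
    subst hz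
    have := (lab_snd N z₀ j).1 hj
    refine ⟨this.2, ?_⟩
    change psg N (z₀ j.succ) = 0
    rw [this.1, psg_neg, this.2]
    rfl
  have := card_lemma (Finset.univ.filter fun j => l.1 j ≠ 0)
    (Finset.univ.filter fun j => (lab N y).1 j ≠ 0)
    (Finset.univ.filter fun j => l.2 j = true) (Finset.univ.filter fun j => (lab N y).2 j = true)
    (by
      intro j hj
      rw [Finset.mem_filter] at hj ⊢
      refine ⟨hj.1, ?_⟩
      change psg N (y j) ≠ 0
      rw [hs j hj.2]
      exact hj.2)
    (by
      intro j hj hj'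
      rw [Finset.mem_filter] at hj hj'
      have h1 := hA j hj.2
      have h2 := hA0 j hj.2
      rw [lab_snd] at hj'
      have h3 : psg N (y j.castSucc) ≠ 0 := fun h => hj' ⟨Finset.mem_univ _, h1, h⟩
      have h4 : psg N (y j.succ) ≠ 0 := by
        rw [h1, psg_neg]
        intro h
        apply h3
        revert h
        generalize psg N (y j.castSucc) = a
        revert a
        decide
      refine ⟨⟨?_, ?_⟩, ?_, ?_⟩
      · rw [Finset.mem_filter]; exact ⟨Finset.mem_univ _, h3⟩
      · simp [h2.1]
      · rw [Finset.mem_filter]; exact ⟨Finset.mem_univ _, h4⟩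
      · simp [h2.2])
  rcases this with ⟨h1, h2⟩ | h
  · left
    ext1
    · funext j
      by_cases hj : l.1 j = 0
      · rw [hj]
        by_contra hne
        have h3 : j ∈ Finset.univ.filter fun j => (lab N y).1 j ≠ 0 := by
          rw [Finset.mem_filter]; exact ⟨Finset.mem_univ _, hne⟩
        rw [← h1, Finset.mem_filter] at h3
        exact h3.2 hj
      · exact hs j hj
    · funext j
      have h3 := Finset.ext_iff.1 h2 j
      simp only [Finset.mem_filter, Finset.mem_univ, true_and] at h3
      exact (Bool.eq_iff_iff.2 h3).symm
  · right
    exact h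

/-- Open neighbourhoods separating labels of the same weight. -/
def OO (N : Sph m) (l : Lab k) : Set (Fin (k + 1) → Sph m) :=
  {y | ∀ l' : Lab k, l' ≠ l → wt l' = wt l →
    Metric.infEDist y {z | lab N z = l} < Metric.infEDist y {z | lab N z = l'}}

theorem isOpen_OO (N : Sph m) (l : Lab k) : IsOpen (OO N l) := by
  have : OO N l = ⋂ l' : Lab k, ⋂ _ : l' ≠ l, ⋂ _ : wt l' = wt l,
    {y | Metric.infEDist y {z | lab N z = l} < Metric.infEDist y {z | lab N z = l'}} := by
    ext y
    simp [OO]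
  rw [this]
  refine isOpen_iInter_of_finite fun l' => isOpen_iInter_of_finite fun _ =>
    isOpen_iInter_of_finite fun _ => isOpen_lt Metric.continuous_infEDist Metric.continuous_infEDist

theorem mem_OO (N : Sph m) (y : Fin (k + 1) → Sph m) : y ∈ OO N (lab N y) := by
  intro l' hl' hw
  have h1 : Metric.infEDist y {z | lab N z = lab N y} = 0 :=
    Metric.infEDist_zero_of_mem rfl
  rw [h1, pos_iff_ne_zero]
  intro h0
  rcases closure_lab N l' y (Metric.mem_closure_iff_infEDist_zero.2 h0) with h | h
  · exact hl' h.symm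
  · omega

theorem OO_unique (N : Sph m) (l l' : Lab k) (y : Fin (k + 1) → Sph m) (h : y ∈ OO N l)
    (h' : y ∈ OO N l') (hw : wt l = wt l') : l = l' := by
  by_contra hne
  exact lt_asymm (h l' (Ne.symm hne) hw.symm) (h' l hne hw)

theorem infEDist_rev (N : Sph m) (l : Lab k) (y : Fin (k + 1) → Sph m) :
    Metric.infEDist (rtuple y) {z | lab N z = rlab l} = Metric.infEDist y {z | lab N z = l} := by
  have hi : Isometry (rtuple : (Fin (k + 1) → Sph m) → _) := by
    intro a b
    simp only [edist_pi_def, rtuple]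
    apply le_antisymm
    · apply Finset.sup_le
      intro j _
      exact Finset.le_sup (f := fun j => edist (a j) (b j)) (Finset.mem_univ j.rev)
    · apply Finset.sup_le
      intro j _
      have := Finset.le_sup (f := fun j : Fin (k + 1) => edist (a j.rev) (b j.rev))
        (Finset.mem_univ j.rev)
      simpa using this
  have himg : {z : Fin (k + 1) → Sph m | lab N z = rlab l} = rtuple '' {z | lab N z = l} := by
    ext z
    simp only [Set.mem_ofPred_eq, Set.mem_image]
    constructor
    · intro h
      refine ⟨rtuple z, by rw [lab_rtuple, h, rlab_rlab], ?_⟩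
      funext j
      simp [rtuple]
    · rintro ⟨x, hx, rfl⟩
      rw [lab_rtuple, hx]
  rw [himg, Metric.infEDist_image hi]

theorem OO_rev (N : Sph m) (l : Lab k) (y : Fin (k + 1) → Sph m) (h : y ∈ OO N l) :
    rtuple y ∈ OO N (rlab l) := by
  intro l' hl' hw
  have h1 := h (rlab l') (by rintro rfl; exact hl' (rlab_rlab l').symm)
    (by rw [wt_rlab, hw, wt_rlab])
  rw [infEDist_rev]
  have h2 := infEDist_rev N (rlab l') y
  rw [rlab_rlab] at h2
  rw [h2]
  exact h1

end

end ASC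

namespace ASC

section
variable {m k : ℕ}

/-- Short name for Euclidean space. -/
abbrev EE (m : ℕ) : Type := EuclideanSpace ℝ (Fin (m + 1))

/-- Bump direction. -/
noncomputable def MM (u x y : EE m) : EE m :=
  ‖x - y‖ ^ 2 • u - inner ℝ u (x - y) • (x - y)

theorem MM_comm (u x y : EE m) : MM u x y = MM u y x := by
  unfold MM
  rw [norm_sub_rev x y, ← neg_sub y x, inner_neg_right, smul_neg, neg_smul, neg_neg]

theorem MM_zero (x y : EE m) : MM 0 x y = 0 := by
  simp [MM]

theorem MM_inner (u x y : EE m) : inner ℝ (MM u x y) (x - y) = 0 := by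
  unfold MM
  rw [inner_sub_left, real_inner_smul_left, real_inner_smul_left, real_inner_self_eq_norm_sq]
  ring

theorem arc_ne_zero (u : EE m) (x y : EE m) (hx : ‖x‖ = 1) (hy : ‖y‖ = 1)
    (h : (2 : ℝ) • (x + y) + MM u x y ≠ 0) (t : ℝ) :
    (1 - t) • x + t • y + (t * (1 - t)) • MM u x y ≠ 0 := by
  intro h0
  have h1 := congrArg (fun v => inner ℝ v (x - y)) h0
  simp only [inner_add_left, real_inner_smul_left, MM_inner, inner_zero_left] at h1
  simp only [inner_sub_right, real_inner_self_eq_norm_sq, hx, hy, real_inner_comm x y] at h1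
  have h2 : (1 - 2 * t) * (1 - inner ℝ x y) = 0 := by
    linarith
  rcases mul_eq_zero.1 h2 with h3 | h3
  · have ht : t = 1 / 2 := by linarith
    apply h
    subst ht
    have h4 : (2 : ℝ) • (x + y) + MM u x y = (4 : ℝ) • ((1 - (1 / 2 : ℝ)) • x + (1 / 2 : ℝ) • y
        + ((1 / 2 : ℝ) * (1 - 1 / 2)) • MM u x y) := by
      module
    rw [h4, h0, smul_zero]
  · have hc : inner ℝ x y = 1 := by linarith
    have hxy : x = y := (inner_eq_one_iff_of_norm_eq_one (𝕜 := ℝ) hx hy).1 hc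
    subst hxy
    have h5 : MM u x x = 0 := by simp [MM]
    rw [h5, smul_zero, add_zero, ← add_smul] at h0
    simp at h0
    rw [h0] at hx
    simp at hx

/-- Hat function. -/
noncomputable def hat (x : ℝ) : ℝ := max 0 (1 - |x|)

/-- Bump function. -/
noncomputable def bmp (x : ℝ) : ℝ := max 0 (x * (1 - x))

theorem hat_neg (x : ℝ) : hat (-x) = hat x := by simp [hat]

theorem bmp_sub (x : ℝ) : bmp (1 - x) = bmp x := by
  unfold bmp
  congr 1
  ring

theorem hat_eq_zero (x : ℝ) (h : 1 ≤ |x|) : hat x = 0 := by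
  unfold hat
  exact max_eq_left (by linarith)

theorem bmp_eq_zero (x : ℝ) (h : x ≤ 0 ∨ 1 ≤ x) : bmp x = 0 := by
  unfold bmp
  apply max_eq_left
  rcases h with h | h <;> nlinarith

theorem continuous_hat : Continuous hat := by
  unfold hat
  fun_prop

theorem continuous_bmp : Continuous bmp := by
  unfold bmp
  fun_prop

/-- The unnormalised path. -/
noncomputable def PP (u : Fin k → EE m) (y : Fin (k + 1) → EE m) (x : ℝ) : EE m :=
  ∑ j : Fin (k + 1), hat (x - j) • y j
    + ∑ j : Fin k, bmp (x - j) • MM (u j) (y j.castSucc) (y j.succ)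

theorem PP_rev (u : Fin k → EE m) (y : Fin (k + 1) → EE m) (x : ℝ) :
    PP (fun j => u j.rev) (fun j => y j.rev) x = PP u y (k - x) := by
  unfold PP
  congr 1
  · rw [← Equiv.sum_comp Fin.revPerm]
    refine Finset.sum_congr rfl fun j _ => ?_
    simp only [Fin.revPerm_apply, Fin.rev_rev]
    congr 1
    rw [← hat_neg]
    congr 1
    rw [Fin.val_rev, Nat.cast_sub (by omega)]
    push_cast
    ring
  · rw [← Equiv.sum_comp Fin.revPerm]
    refine Finset.sum_congr rfl fun j _ => ?_
    simp only [Fin.revPerm_apply, Fin.rev_rev, Fin.rev_castSucc, Fin.rev_succ]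
    rw [MM_comm]
    congr 1
    rw [← bmp_sub]
    congr 1
    rw [Fin.val_rev, Nat.cast_sub (by omega)]
    push_cast
    ring

theorem PP_seg (u : Fin k → EE m) (y : Fin (k + 1) → EE m) (j : Fin k) (s : ℝ) (hs0 : 0 ≤ s)
    (hs1 : s ≤ 1) : PP u y (j + s) = (1 - s) • y j.castSucc + s • y j.succ
      + (s * (1 - s)) • MM (u j) (y j.castSucc) (y j.succ) := by
  unfold PP
  congr 1
  · rw [Fintype.sum_eq_add j.castSucc j.succ Fin.castSucc_lt_succ.ne]
    · congr 2
      · simp [hat, abs_of_nonneg hs0, hs1]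
      · have : (j : ℝ) + s - (j.succ : Fin (k + 1)) = -(1 - s) := by
          rw [Fin.val_succ]; push_cast; ring
        rw [this, hat_neg, hat, abs_of_nonneg (by linarith)]
        simp [hs0]
    · rintro i ⟨h1, h2⟩
      rw [hat_eq_zero, zero_smul]
      have h1' : (i : ℕ) ≠ j := fun h => h1 (Fin.ext h)
      have h2' : (i : ℕ) ≠ j + 1 := fun h => h2 (Fin.ext h)
      rcases lt_or_gt_of_ne h1' with h | h
      · have h' : (i : ℝ) + 1 ≤ j := by exact_mod_cast h
        rw [abs_of_nonneg] <;> linarith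
      · have h3 : (j : ℕ) + 2 ≤ i := by omega
        have h' : (j : ℝ) + 2 ≤ i := by exact_mod_cast h3
        rw [abs_of_nonpos] <;> linarith
  · rw [Fintype.sum_eq_single j]
    · congr 1
      rw [add_sub_cancel_left, bmp]
      exact max_eq_right (mul_nonneg hs0 (by linarith))
    · intro i h1
      have h1' : (i : ℕ) ≠ j := fun h => h1 (Fin.ext h)
      rw [bmp_eq_zero, zero_smul]
      rcases lt_or_gt_of_ne h1' with h | h
      · have h' : (i : ℝ) + 1 ≤ j := by exact_mod_cast h
        right; linarith
      · have h' : (j : ℝ) + 1 ≤ i := by exact_mod_cast h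
        left; linarith

theorem PP_pt (u : Fin k → EE m) (y : Fin (k + 1) → EE m) (j : Fin (k + 1)) :
    PP u y j = y j := by
  unfold PP
  rw [Fintype.sum_eq_single j, Finset.sum_eq_zero, add_zero]
  · simp [hat]
  · intro i _
    rw [bmp_eq_zero, zero_smul]
    rcases Nat.lt_or_ge (i : ℕ) j with h | h
    · have h' : (i : ℝ) + 1 ≤ (j : ℕ) := by exact_mod_cast h
      right; linarith
    · have h' : ((j : ℕ) : ℝ) ≤ i := by exact_mod_cast h
      left; linarith
  · intro i h1
    have h1' : (i : ℕ) ≠ j := fun h => h1 (Fin.ext h)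
    rw [hat_eq_zero, zero_smul]
    rcases lt_or_gt_of_ne h1' with h | h
    · have h' : ((i : ℕ) : ℝ) + 1 ≤ (j : ℕ) := by exact_mod_cast h
      rw [abs_of_nonneg] <;> linarith
    · have h' : ((j : ℕ) : ℝ) + 1 ≤ (i : ℕ) := by exact_mod_cast h
      rw [abs_of_nonpos] <;> linarith

theorem PP_ne_zero (hk : 1 ≤ k) (u : Fin k → EE m) (y : Fin (k + 1) → EE m) (hy : ∀ j, ‖y j‖ = 1)
    (h : ∀ j : Fin k, (2 : ℝ) • (y j.castSucc + y j.succ) + MM (u j) (y j.castSucc) (y j.succ) ≠ 0)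
    (x : ℝ) (hx0 : 0 ≤ x) (hx1 : x ≤ k) : PP u y x ≠ 0 := by
  obtain ⟨j, s, hs0, hs1, rfl⟩ : ∃ j : Fin k, ∃ s : ℝ, 0 ≤ s ∧ s ≤ 1 ∧ x = j + s := by
    rcases lt_or_eq_of_le hx1 with hlt | rfl
    · have h1 := Nat.floor_le hx0
      have h2 := Nat.lt_floor_add_one x
      exact ⟨⟨⌊x⌋₊, (Nat.floor_lt hx0).2 hlt⟩, x - ⌊x⌋₊, by linarith, by linarith, by simp⟩
    · refine ⟨⟨k - 1, by omega⟩, 1, zero_le_one, le_rfl, ?_⟩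
      simp only
      rw [Nat.cast_sub hk]
      simp
  rw [PP_seg u y j s hs0 hs1]
  exact arc_ne_zero _ _ _ (hy _) (hy _) (h j) s

theorem continuous_PP (u : Fin k → EE m) :
    Continuous fun q : (Fin (k + 1) → EE m) × ℝ => PP u q.1 q.2 := by
  unfold PP MM
  have h1 := continuous_hat
  have h2 := continuous_bmp
  fun_prop

open Classical in
/-- Normalisation. -/
noncomputable def nrm (N : Sph m) (v : EE m) : Sph m :=
  if h : v = 0 then N else ⟨‖v‖⁻¹ • v, by
    rw [mem_sphere_zero_iff_norm, norm_smul, norm_inv, norm_norm,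
      inv_mul_cancel₀ (norm_ne_zero_iff.2 h)]⟩

theorem nrm_coe (N x : Sph m) : nrm N (x : EE m) = x := by
  have hx : ‖(x : EE m)‖ = 1 := mem_sphere_zero_iff_norm.1 x.2
  have : (x : EE m) ≠ 0 := by
    intro h
    rw [h] at hx
    simp at hx
  unfold nrm
  rw [dif_neg this]
  ext1
  simp only [hx, inv_one, one_smul]

theorem continuousAt_nrm (N : Sph m) (v : EE m) (hv : v ≠ 0) : ContinuousAt (nrm N) v := by
  rw [Topology.IsInducing.subtypeVal.continuousAt_iff]
  have h1 : ContinuousAt (fun v : EE m => ‖v‖⁻¹ • v) v :=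
    (continuous_norm.continuousAt.inv₀ (norm_ne_zero_iff.2 hv)).smul continuousAt_id
  refine h1.congr ?_
  filter_upwards [isOpen_ne.mem_nhds hv] with w hw
  simp only [Function.comp, nrm]
  rw [dif_neg hw]

/-- Direction from label. -/
noncomputable def uu (N e : EE m) (l : Lab k) (j : Fin k) : EE m :=
  if l.2 j = true then N else
    if l.1 j.castSucc ≠ 0 ∧ l.1 j.succ = -l.1 j.castSucc then e else 0

theorem uu_rev (N e : EE m) (l : Lab k) : uu N e (rlab l) = fun j => uu N e l j.rev := by
  funext j
  unfold uu rlab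
  simp only [Fin.rev_castSucc, Fin.rev_succ]
  congr 1
  have : (l.1 j.rev.succ ≠ 0 ∧ l.1 j.rev.castSucc = -l.1 j.rev.succ) ↔
      (l.1 j.rev.castSucc ≠ 0 ∧ l.1 j.rev.succ = -l.1 j.rev.castSucc) := by
    generalize l.1 j.rev.succ = a
    generalize l.1 j.rev.castSucc = b
    revert a b
    decide
  simp only [this]

/-- Domain. -/
def QQ (N e : EE m) (l : Lab k) : Set (Fin (k + 1) → Sph m) :=
  {y | ∀ j : Fin k, (2 : ℝ) • ((y j.castSucc : EE m) + y j.succ)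
    + MM (uu N e l j) (y j.castSucc : EE m) (y j.succ) ≠ 0}

theorem isOpen_QQ (N e : EE m) (l : Lab k) : IsOpen (QQ N e l) := by
  have : QQ N e l = ⋂ j : Fin k, {y : Fin (k + 1) → Sph m |
      (2 : ℝ) • ((y j.castSucc : EE m) + y j.succ)
        + MM (uu N e l j) (y j.castSucc : EE m) (y j.succ) ≠ 0} := by
    ext y
    simp [QQ]
  rw [this]
  refine isOpen_iInter_of_finite fun j => ?_
  refine isOpen_ne_fun ?_ continuous_const
  unfold MM
  fun_prop

theorem QQ_rev (N e : EE m) (l : Lab k) (y : Fin (k + 1) → Sph m) (h : y ∈ QQ N e l) :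
    rtuple y ∈ QQ N e (rlab l) := by
  intro j
  have := h j.rev
  rw [uu_rev]
  simp only [rtuple, Fin.rev_castSucc, Fin.rev_succ]
  rw [MM_comm, add_comm (y j.rev.succ : EE m)]
  exact this

theorem mem_QQ (N : Sph m) (e : EE m) (he : e ≠ 0) (hNe : inner ℝ e (N : EE m) = 0)
    (y : Fin (k + 1) → Sph m) : y ∈ QQ (N : EE m) e (lab N y) := by
  intro j
  have hn : ∀ x : Sph m, ‖(x : EE m)‖ = 1 := fun x => mem_sphere_zero_iff_norm.1 x.2
  have hanti : ∀ (u : EE m), y j.succ = -y j.castSucc →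
      (2 : ℝ) • ((y j.castSucc : EE m) + y j.succ) + MM u (y j.castSucc : EE m) (y j.succ)
        = (4 : ℝ) • (u - inner ℝ u (y j.castSucc : EE m) • (y j.castSucc : EE m)) := by
    intro u h
    have h1 : (y j.succ : EE m) = -(y j.castSucc : EE m) := congrArg Subtype.val h
    rw [h1]
    unfold MM
    rw [sub_neg_eq_add, ← two_smul ℝ (y j.castSucc : EE m), norm_smul, hn, inner_smul_right]
    simp only [add_neg_cancel, smul_zero, zero_add]
    norm_num
    module
  unfold uu
  split_ifs with h1 h2
  · rw [lab_snd] at h1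
    rw [hanti _ h1.1]
    intro h0
    rw [smul_eq_zero] at h0
    have h3 := h0.resolve_left (by norm_num)
    rw [sub_eq_zero] at h3
    have h4 := congrArg norm h3
    rw [norm_smul, hn, hn, mul_one, Real.norm_eq_abs] at h4
    rcases abs_choice (inner ℝ (N : EE m) (y j.castSucc : EE m)) with h5 | h5
    · rw [← h4] at h5
      rw [← h5, one_smul] at h3
      have : psg N (y j.castSucc) = 1 := (psg_one N _).2 (Subtype.ext h3.symm)
      rw [h1.2] at this
      exact absurd this (by decide)
    · rw [← h4, eq_comm, neg_eq_iff_eq_neg] at h5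
      rw [h5, neg_one_smul] at h3
      have : psg N (y j.castSucc) = -1 := (psg_neg_one N _).2 (Subtype.ext (by
        change (y j.castSucc : EE m) = -(N : EE m)
        rw [h3, neg_neg]))
      rw [h1.2] at this
      exact absurd this (by decide)
  · have h3 : psg N (y j.succ) = -psg N (y j.castSucc) := h2.2
    have h4 : psg N (y j.castSucc) ≠ 0 := h2.1
    have h5 : (y j.castSucc = N ∨ y j.castSucc = -N) ∧ y j.succ = -y j.castSucc := by
      rcases h : psg N (y j.castSucc) with _ | _ | _
      · exact absurd h h4
      · have h6 := (psg_neg_one N _).1 h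
        rw [h] at h3
        have h7 := (psg_one N _).1 h3
        exact ⟨Or.inr h6, by rw [h6, h7, neg_neg]⟩
      · have h6 := (psg_one N _).1 h
        rw [h] at h3
        have h7 := (psg_neg_one N _).1 h3
        exact ⟨Or.inl h6, by rw [h6, h7]⟩
    rw [hanti _ h5.2]
    have h6 : inner ℝ e (y j.castSucc : EE m) = 0 := by
      rcases h5.1 with h | h
      · rw [h, hNe]
      · rw [h]
        change inner ℝ e (-(N : EE m)) = 0
        rw [inner_neg_right, hNe, neg_zero]
    rw [h6, zero_smul, sub_zero]
    exact smul_ne_zero (by norm_num) he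
  · rw [MM_zero, add_zero]
    apply smul_ne_zero (by norm_num)
    intro h0
    have h3 : y j.succ = -y j.castSucc := by
      apply Subtype.ext
      change (y j.succ : EE m) = -(y j.castSucc : EE m)
      exact eq_neg_of_add_eq_zero_right h0
    by_cases h4 : psg N (y j.castSucc) = 0
    · exact h1 ((lab_snd N y j).2 ⟨h3, h4⟩)
    · apply h2
      refine ⟨h4, ?_⟩
      change psg N (y j.succ) = -psg N (y j.castSucc)
      rw [h3, psg_neg]

end

end ASC

namespace ASC

section
variable {m k : ℕ}

/-- Piece. -/
def WW (N : Sph m) (e : EE m) (l : Lab k) : Set (Fin (k + 1) → Sph m) :=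
  OO N l ∩ QQ (N : EE m) e l

/-- The open sets of the planner. -/
def UU (N : Sph m) (e : EE m) (w : ℕ) : Set (Fin (k + 1) → Sph m) :=
  {y | ∃ l : Lab k, wt l = w ∧ y ∈ WW N e l}

/-- The section on a piece. -/
noncomputable def sec (N : Sph m) (e : EE m) (l : Lab k) (y : Fin (k + 1) → Sph m) (t : ℝ) :
    Sph m :=
  nrm N (PP (uu (N : EE m) e l) (fun j => (y j : EE m)) (k * t))

theorem nrm_comp {Z : Type*} [TopologicalSpace Z] (N : Sph m) (f : Z → EE m) (z : Z)
    (hf : ContinuousAt f z) (h : f z ≠ 0) : ContinuousAt (fun z => nrm N (f z)) z :=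
  (continuousAt_nrm N _ h).comp hf

theorem continuous_PPS (u : Fin k → EE m) :
    Continuous fun q : (Fin (k + 1) → Sph m) × ℝ =>
      PP u (fun j => (q.1 j : EE m)) ((k : ℝ) * q.2) := by
  unfold PP MM
  have h1 := continuous_hat
  have h2 := continuous_bmp
  fun_prop

theorem sec_continuousAt_aux (N : Sph m) (u : Fin k → EE m)
    (y : Fin (k + 1) → Sph m) (t : ℝ)
    (h1 : PP u (fun j => (y j : EE m)) ((k : ℝ) * t) ≠ 0) :
    ContinuousAt (fun q : (Fin (k + 1) → Sph m) × ℝ =>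
      nrm N (PP u (fun j => (q.1 j : EE m)) ((k : ℝ) * q.2))) (y, t) :=
  nrm_comp N (fun q : (Fin (k + 1) → Sph m) × ℝ =>
      PP u (fun j => (q.1 j : EE m)) ((k : ℝ) * q.2)) (y, t) (continuous_PPS u).continuousAt h1

theorem sec_continuousAt (hk : 1 ≤ k) (N : Sph m) (e : EE m) (l : Lab k)
    (y : Fin (k + 1) → Sph m) (hy : y ∈ WW N e l) (t : ℝ) (ht : t ∈ Set.Icc (0 : ℝ) 1) :
    ContinuousAt (fun q : (Fin (k + 1) → Sph m) × ℝ => sec N e l q.1 q.2) (y, t) := by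
  have hk0 : (0 : ℝ) ≤ k := Nat.cast_nonneg k
  have h1 : PP (uu (N : EE m) e l) (fun j => (y j : EE m)) (k * t) ≠ 0 := by
    apply PP_ne_zero hk
    · exact fun j => mem_sphere_zero_iff_norm.1 (y j).2
    · exact hy.2
    · exact mul_nonneg hk0 ht.1
    · exact mul_le_of_le_one_right hk0 ht.2
  exact sec_continuousAt_aux N (uu (N : EE m) e l) y t h1

theorem isOpen_UU (N : Sph m) (e : EE m) (w : ℕ) : IsOpen (UU (k := k) N e w) := by
  have : UU (k := k) N e w = ⋃ l : Lab k, ⋃ _ : wt l = w, WW N e l := by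
    ext y
    simp [UU]
  rw [this]
  exact isOpen_iUnion fun l => isOpen_iUnion fun _ => (isOpen_OO N l).inter (isOpen_QQ _ e l)

theorem UU_rev (N : Sph m) (e : EE m) (w : ℕ) (y : Fin (k + 1) → Sph m) (hy : y ∈ UU N e w) :
    rtuple y ∈ UU N e w := by
  obtain ⟨l, hl, h1, h2⟩ := hy
  exact ⟨rlab l, by rw [wt_rlab, hl], OO_rev N l y h1, QQ_rev _ e l y h2⟩

theorem upper (m k : ℕ) (hm : 1 ≤ m) (hk : 1 ≤ k) :
    HasBidirPlanners (Sph m) (k + 1) (k + 1 + 1) := by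
  obtain ⟨N, e, he, hNe⟩ : ∃ (N : Sph m) (e : EE m), e ≠ 0 ∧ inner ℝ e (N : EE m) = 0 := by
    refine ⟨⟨EuclideanSpace.single 0 1, by simp⟩, EuclideanSpace.single (Fin.last m) 1, ?_, ?_⟩
    · intro h
      have := congrArg (fun v : EE m => v (Fin.last m)) h
      simp at this
    · have : (0 : Fin (m + 1)) ≠ Fin.last m := by
        intro h
        have := congrArg Fin.val h
        simp at this
        omega
      simp [EuclideanSpace.inner_single_left, this]
  have hkR : (k : ℝ) ≠ 0 := by
    have : k ≠ 0 := by omega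
    exact_mod_cast this
  refine ⟨fun w => UU N e w, fun w => isOpen_UU N e w, ?_, fun w => UU_rev N e w, ?_⟩
  · rw [Set.eq_univ_iff_forall]
    intro y
    refine Set.mem_iUnion.2 ⟨⟨wt (lab N y), by have := wt_lab_le N y; omega⟩, ?_⟩
    exact ⟨lab N y, rfl, mem_OO N y, mem_QQ N e he hNe y⟩
  · intro w
    have hL : ∀ y : UU (k := k) N e w, ∃ l : Lab k, wt l = w ∧ (y : Fin (k + 1) → Sph m) ∈ WW N e l :=
      fun y => y.2
    choose L hLw hL using hL
    have huniq : ∀ (y : UU (k := k) N e w) (l : Lab k), wt l = w →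
        (y : Fin (k + 1) → Sph m) ∈ WW N e l → L y = l := by
      intro y l hl hy
      exact OO_unique N _ _ y (hL y).1 hy.1 ((hLw y).trans hl.symm)
    have hcont : Continuous fun q : UU (k := k) N e w × unitInterval =>
        sec N e (L q.1) q.1 (q.2 : ℝ) := by
      rw [continuous_iff_continuousAt]
      rintro ⟨y, t⟩
      have h1 := sec_continuousAt hk N e (L y) y (hL y) t t.2
      have h2 : ContinuousAt (fun q : UU (k := k) N e w × unitInterval =>
          sec N e (L y) q.1 (q.2 : ℝ)) (y, t) := by
        refine ContinuousAt.comp (x := (y, t))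
          (f := fun q : UU (k := k) N e w × unitInterval =>
            ((q.1 : Fin (k + 1) → Sph m), (q.2 : ℝ)))
          (g := fun q : (Fin (k + 1) → Sph m) × ℝ => sec N e (L y) q.1 q.2) h1 ?_
        exact Continuous.continuousAt (by fun_prop)
      refine h2.congr ?_
      have h3 : IsOpen {q : UU (k := k) N e w × unitInterval |
          (q.1 : Fin (k + 1) → Sph m) ∈ WW N e (L y)} := by
        refine ((isOpen_OO N (L y)).inter (isOpen_QQ _ e (L y))).preimage ?_
        fun_prop
      filter_upwards [h3.mem_nhds (hL y)] with q hq
      rw [huniq q.1 (L y) (hLw y) hq]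
    refine ⟨ContinuousMap.curry ⟨_, hcont⟩, ?_, ?_⟩
    · intro y j
      simp only [ContinuousMap.curry_apply, ContinuousMap.coe_mk]
      unfold sec
      have : (k : ℝ) * (evalPt (k + 1) j : ℝ) = (j : ℕ) := by
        simp only [evalPt]
        push_cast
        rw [add_sub_cancel_right]
        field_simp
      rw [this, PP_pt, nrm_coe]
    · intro y hy
      ext1 t
      simp only [ContinuousMap.curry_apply, ContinuousMap.coe_mk, rpath, ContinuousMap.comp_apply]
      have h1 : L ⟨rtuple (y : Fin (k + 1) → Sph m), hy⟩ = rlab (L y) := by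
        apply huniq
        · rw [wt_rlab, hLw]
        · exact ⟨OO_rev N _ _ (hL y).1, QQ_rev _ e _ _ (hL y).2⟩
      rw [h1]
      unfold sec
      rw [uu_rev]
      congr 1
      have h2 := PP_rev (uu (N : EE m) e (L y)) (fun j => ((y : Fin (k + 1) → Sph m) j : EE m))
        (k * t)
      refine h2.trans ?_
      congr 1
      rw [unitInterval.coe_symm_eq]
      ring

end

end ASC

/-- For every `m ≥ 1` even and every `n ≥ 2`,
`TC^β_n(S^m) = n + 1`. -/
theorem TCbeta_sphere_even (m n : ℕ) (hm : 1 ≤ m) (hme : Even m) (hn : 2 ≤ n) :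
    TCbeta (Sph m) n = (n : ℕ∞) + 1 := by
  apply le_antisymm
  · obtain ⟨k, rfl⟩ : ∃ k, n = k + 1 := ⟨n - 1, by omega⟩
    exact sInf_le ⟨k + 1 + 1, by push_cast; rfl, ASC.upper m k hm (by omega)⟩
  · refine le_sInf ?_
    rintro _ ⟨k, rfl, h⟩
    have := ASC.lower' m n k hm hme hn h
    exact_mod_cast this
end

section
/- For every m ≥ 1 odd and every n ≥ 3 odd, the n-th bidirectional topological complexity of the m-sphere equals n: TC^β_n(S^m) = n, where S^m is the unit sphere in ℝ^{m+1}. -/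
open unitInterval

section BrouwerPart
open MeasureTheory

theorem br_small {d : ℕ} (φ : EuclideanSpace ℝ (Fin d) → EuclideanSpace ℝ (Fin d))
    (hφ : ContDiff ℝ 1 φ) (R : ℝ) (hs : ∀ x, R ≤ ‖x‖ → φ x = 0) :
    ∃ δ > 0, ∀ t : ℝ, 0 < t → t < δ → ∀ g : EuclideanSpace ℝ (Fin d) → ℝ,
      ∫ x in Metric.closedBall 0 R, g (x + t • φ x) *
        ((ContinuousLinearMap.id ℝ _ + t • fderiv ℝ φ x).det) = ∫ x in Metric.closedBall 0 R, g x := by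
  have hcs : HasCompactSupport φ := by
    apply HasCompactSupport.of_support_subset_isCompact (isCompact_closedBall (0 : EuclideanSpace ℝ (Fin d)) R)
    intro x hx
    by_contra h
    simp only [Metric.mem_closedBall, dist_zero_right, not_le] at h
    exact hx (hs x h.le)
  obtain ⟨K, hK⟩ := ContDiff.lipschitzWith_of_hasCompactSupport hcs hφ one_ne_zero
  have hfc : Continuous (fderiv ℝ φ) := hφ.continuous_fderiv one_ne_zero
  have hdetc : Continuous (fun z : ℝ × EuclideanSpace ℝ (Fin d) =>
      (ContinuousLinearMap.id ℝ (EuclideanSpace ℝ (Fin d)) + z.1 • fderiv ℝ φ z.2).det) :=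
    ContinuousLinearMap.continuous_det.comp (by fun_prop)
  have hpos : ∀ᶠ t in nhds (0:ℝ), ∀ x ∈ Metric.closedBall (0 : EuclideanSpace ℝ (Fin d)) R,
      0 < (ContinuousLinearMap.id ℝ (EuclideanSpace ℝ (Fin d)) + t • fderiv ℝ φ x).det := by
    apply (isCompact_closedBall (0 : EuclideanSpace ℝ (Fin d)) R).eventually_forall_of_forall_eventually
    intro y _
    apply hdetc.continuousAt.eventually (lt_mem_nhds _)
    simp [ContinuousLinearMap.det]
  obtain ⟨δ, hδ, hd⟩ := Metric.eventually_nhds_iff.1 hpos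
  refine ⟨min δ (1 / (K + 1)), lt_min hδ (by positivity), fun t ht htδ g => ?_⟩
  have ht1 : t * K < 1 := by
    have := lt_of_lt_of_le htδ (min_le_right _ _)
    rw [lt_div_iff₀ (by positivity)] at this
    nlinarith
  have hpos' := hd (y := t) (by
    rw [Real.dist_eq, sub_zero, abs_of_pos ht]; exact lt_of_lt_of_le htδ (min_le_left _ _))
  set f : EuclideanSpace ℝ (Fin d) → EuclideanSpace ℝ (Fin d) := fun x => x + t • φ x with hf
  have hinj : Function.Injective f := by
    intro x y hxy
    have h1 : x - y = t • (φ y - φ x) := by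
      have : x + t • φ x = y + t • φ y := hxy
      rw [smul_sub, sub_eq_sub_iff_add_eq_add, this]; abel
    have h2 : ‖x - y‖ ≤ t * (K * ‖x - y‖) := by
      have := hK.dist_le_mul y x
      rw [dist_eq_norm, dist_eq_norm, norm_sub_rev y x] at this
      calc ‖x - y‖ = t * ‖φ y - φ x‖ := by rw [h1, norm_smul, Real.norm_of_nonneg ht.le]
        _ ≤ _ := by gcongr
    have h3 : ‖x - y‖ = 0 := by
      have := norm_nonneg (x - y)
      nlinarith
    exact sub_eq_zero.1 (norm_eq_zero.1 h3)
  have hsurj : Function.Surjective f := by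
    intro y
    have hc : ContractingWith (t.toNNReal * K) (fun x => y - t • φ x) := by
      refine ⟨?_, ?_⟩
      · rw [← NNReal.coe_lt_coe, NNReal.coe_mul, Real.coe_toNNReal t ht.le]; exact_mod_cast ht1
      · apply LipschitzWith.of_dist_le_mul
        intro a b
        have := hK.dist_le_mul a b
        rw [dist_sub_left, dist_smul₀, Real.norm_of_nonneg ht.le]
        rw [NNReal.coe_mul, Real.coe_toNNReal t ht.le]
        calc t * dist (φ a) (φ b) ≤ t * (K * dist a b) := by gcongr
          _ = _ := by ring
    refine ⟨hc.fixedPoint, ?_⟩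
    have := hc.fixedPoint_isFixedPt
    simp only [Function.IsFixedPt] at this
    simp only [hf]
    nth_rewrite 1 [← this]
    abel
  have himg : f '' Metric.closedBall 0 R = Metric.closedBall 0 R := by
    have hout : ∀ x, x ∉ Metric.closedBall 0 R → f x = x := by
      intro x hx
      simp only [Metric.mem_closedBall, dist_zero_right, not_le] at hx
      simp [hf, hs x hx.le]
    ext y
    constructor
    · rintro ⟨x, hx, rfl⟩
      by_contra h
      exact h (by rw [hinj (hout _ h)]; exact hx)
    · intro hy
      obtain ⟨x, rfl⟩ := hsurj y
      refine ⟨x, ?_, rfl⟩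
      by_contra h
      rw [hout x h] at hy
      exact h hy
  have hcv := integral_image_eq_integral_abs_det_fderiv_smul (volume : Measure (EuclideanSpace ℝ (Fin d)))
    (s := Metric.closedBall 0 R) (f := f) (f' := fun x => ContinuousLinearMap.id ℝ _ + t • fderiv ℝ φ x)
    measurableSet_closedBall (fun x _ => by
      apply HasFDerivAt.hasFDerivWithinAt
      exact (hasFDerivAt_id x).add (((hφ.differentiable one_ne_zero) x).hasFDerivAt.const_smul t))
    hinj.injOn g
  rw [himg] at hcv
  rw [hcv]
  apply setIntegral_congr_fun measurableSet_closedBall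
  intro x hx
  simp only [smul_eq_mul]
  rw [abs_of_pos (hpos' x hx), mul_comm]

theorem br_poly {d : ℕ} (φ : EuclideanSpace ℝ (Fin d) → EuclideanSpace ℝ (Fin d))
    (hφ : ContDiff ℝ 1 φ) (R : ℝ) (hs : ∀ x, R ≤ ‖x‖ → φ x = 0) (p : Polynomial ℝ) :
      ∫ x in Metric.closedBall 0 R, p.eval (‖x + φ x‖ ^ 2) *
        ((ContinuousLinearMap.id ℝ _ + fderiv ℝ φ x).det)
      = ∫ x in Metric.closedBall (0 : EuclideanSpace ℝ (Fin d)) R, p.eval (‖x‖ ^ 2) := by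
  classical
  obtain ⟨δ, hδ, hsm⟩ := br_small φ hφ R hs
  have hfc : Continuous (fderiv ℝ φ) := hφ.continuous_fderiv one_ne_zero
  have hc : Continuous φ := hφ.continuous
  let A := C(EuclideanSpace ℝ (Fin d), ℝ)
  let a0 : A := ⟨fun x => ‖x‖ ^ 2, by fun_prop⟩
  let a1 : A := ⟨fun x => 2 * inner ℝ x (φ x), by fun_prop⟩
  let a2 : A := ⟨fun x => ‖φ x‖ ^ 2, by fun_prop⟩
  let b := (EuclideanSpace.basisFun (Fin d) ℝ).toBasis
  let D : Fin d → Fin d → A := fun i j => ⟨fun x => (fderiv ℝ φ x (b j)) i, by fun_prop⟩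
  let M : Matrix (Fin d) (Fin d) (Polynomial A) := fun i j =>
    (1 : Matrix (Fin d) (Fin d) (Polynomial A)) i j + Polynomial.X * Polynomial.C (D i j)
  let cst : ℝ →+* Polynomial A := Polynomial.C.comp (algebraMap ℝ A)
  let Q : Polynomial A := p.eval₂ cst (Polynomial.C a0 + Polynomial.C a1 * Polynomial.X
    + Polynomial.C a2 * Polynomial.X ^ 2) * M.det
  let ev : EuclideanSpace ℝ (Fin d) → A →+* ℝ := fun x =>
    { toFun := fun f => f x, map_one' := rfl, map_mul' := fun _ _ => rfl, map_zero' := rfl, map_add' := fun _ _ => rfl }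
  let ψ : EuclideanSpace ℝ (Fin d) → ℝ → Polynomial A →+* ℝ := fun x t => Polynomial.eval₂RingHom (ev x) t
  have hψ : ∀ x t, ψ x t Q = p.eval (‖x + t • φ x‖ ^ 2) *
        ((ContinuousLinearMap.id ℝ _ + t • fderiv ℝ φ x).det) := by
    intro x t
    have h1 : ψ x t (p.eval₂ cst (Polynomial.C a0 + Polynomial.C a1 * Polynomial.X
        + Polynomial.C a2 * Polynomial.X ^ 2)) = p.eval (‖x + t • φ x‖ ^ 2) := by
      rw [Polynomial.hom_eval₂]
      have hid : (ψ x t).comp cst = RingHom.id ℝ := by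
        ext r
        all_goals simp [ψ, cst, ev]
      rw [hid, Polynomial.eval₂_id]
      congr 1
      simp only [ψ, Polynomial.coe_eval₂RingHom, Polynomial.eval₂_add, Polynomial.eval₂_C,
        Polynomial.eval₂_mul, Polynomial.eval₂_X, Polynomial.eval₂_pow]
      rw [norm_add_sq_real, inner_smul_right, norm_smul, mul_pow, Real.norm_eq_abs, sq_abs]
      have e0 : ev x a0 = ‖x‖ ^ 2 := rfl
      have e1 : ev x a1 = 2 * inner ℝ x (φ x) := rfl
      have e2 : ev x a2 = ‖φ x‖ ^ 2 := rfl
      rw [e0, e1, e2]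
      ring
    have h2 : ψ x t M.det = (ContinuousLinearMap.id ℝ (EuclideanSpace ℝ (Fin d)) + t • fderiv ℝ φ x).det := by
      rw [RingHom.map_det, ContinuousLinearMap.det, ← LinearMap.det_toMatrix b]
      congr 1
      ext i j
      have : ψ x t ((1 : Matrix (Fin d) (Fin d) (Polynomial A)) i j) = (b j) i := by
        by_cases h : i = j
        · subst h; simp [b]
        · simp [b, h]
      have e1 : ψ x t (Polynomial.X * Polynomial.C (D i j)) = t * (fderiv ℝ φ x (b j)) i := by
        rw [map_mul]
        simp only [ψ, Polynomial.coe_eval₂RingHom, Polynomial.eval₂_C, Polynomial.eval₂_X]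
        rfl
      have e2 : (ψ x t).mapMatrix M i j = ψ x t ((1 : Matrix (Fin d) (Fin d) (Polynomial A)) i j)
          + ψ x t (Polynomial.X * Polynomial.C (D i j)) := by
        rw [← map_add]; rfl
      rw [e2, this, e1, LinearMap.toMatrix_apply]
      simp [b]
    simp only [Q, map_mul, h1, h2]
  have hsum : ∀ x t, ψ x t Q = ∑ k ∈ Finset.range (Q.natDegree + 1), (Q.coeff k) x * t ^ k := by
    intro x t
    simp only [ψ, Polynomial.coe_eval₂RingHom, Polynomial.eval₂_eq_sum_range]
    rfl
  let P : Polynomial ℝ := ∑ k ∈ Finset.range (Q.natDegree + 1),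
    Polynomial.C (∫ x in Metric.closedBall (0 : EuclideanSpace ℝ (Fin d)) R, (Q.coeff k) x) * Polynomial.X ^ k
  have hP : ∀ t, P.eval t = ∫ x in Metric.closedBall (0 : EuclideanSpace ℝ (Fin d)) R, ψ x t Q := by
    intro t
    simp only [hsum]
    rw [integral_finsetSum]
    · simp only [P, Polynomial.eval_finsetSum, Polynomial.eval_mul, Polynomial.eval_C,
        Polynomial.eval_pow, Polynomial.eval_X, integral_mul_const]
    · intro k _
      apply ContinuousOn.integrableOn_compact (isCompact_closedBall _ _)
      have := (Q.coeff k).continuous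
      fun_prop
  have hPc : P = Polynomial.C (∫ x in Metric.closedBall (0 : EuclideanSpace ℝ (Fin d)) R, p.eval (‖x‖ ^ 2)) := by
    apply Polynomial.eq_of_infinite_eval_eq
    apply (Set.Ioo_infinite hδ).mono
    intro t ht
    simp only [Set.mem_ofPred_eq, Polynomial.eval_C, hP, hψ]
    exact hsm t ht.1 ht.2 (fun y => p.eval (‖y‖ ^ 2))
  have := hP 1
  rw [hPc, Polynomial.eval_C] at this
  rw [this]
  simp only [hψ, one_smul]

theorem br_zero {d : ℕ} (φ : EuclideanSpace ℝ (Fin d) → EuclideanSpace ℝ (Fin d))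
    (hφ : ContDiff ℝ 1 φ) (R : ℝ) (hR : 0 < R) (hs : ∀ x, R ≤ ‖x‖ → φ x = 0)
    (ε : ℝ) (hε : 0 < ε) : ∃ x, ‖x + φ x‖ < ε := by
  by_contra hcon
  push Not at hcon
  have hfc : Continuous (fderiv ℝ φ) := hφ.continuous_fderiv one_ne_zero
  have hc : Continuous φ := hφ.continuous
  have hJc : Continuous (fun x =>
      (ContinuousLinearMap.id ℝ (EuclideanSpace ℝ (Fin d)) + fderiv ℝ φ x).det) :=
    ContinuousLinearMap.continuous_det.comp (by fun_prop)
  set B := Metric.closedBall (0 : EuclideanSpace ℝ (Fin d)) R with hB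
  have hBc : IsCompact B := isCompact_closedBall _ _
  obtain ⟨M, hM⟩ := hBc.exists_bound_of_continuousOn (f := fun x => ‖x‖ + ‖x + φ x‖) (by fun_prop)
  obtain ⟨J, hJ⟩ := hBc.exists_bound_of_continuousOn hJc.continuousOn
  let b : ℝ → ℝ := fun s => max 0 (ε ^ 2 - s)
  have hbc : Continuous b := by fun_prop
  have hb0 : ∀ s, 0 ≤ b s := fun s => le_max_left _ _
  set c := ∫ x in B, b (‖x‖ ^ 2) with hcdef
  have hcpos : 0 < c := by
    rw [hcdef, setIntegral_pos_iff_support_of_nonneg_ae]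
    · have : Metric.ball (0 : EuclideanSpace ℝ (Fin d)) (min ε R) ⊆
        Function.support (fun x : EuclideanSpace ℝ (Fin d) => b (‖x‖ ^ 2)) ∩ B := by
        intro x hx
        simp only [Metric.mem_ball, dist_zero_right, lt_min_iff] at hx
        refine ⟨?_, by simp [hB, hx.2.le]⟩
        simp only [Function.mem_support, b]
        apply ne_of_gt
        apply lt_max_of_lt_right
        have := norm_nonneg x
        nlinarith
      exact lt_of_lt_of_le (Metric.measure_ball_pos _ _ (lt_min hε hR)) (measure_mono this)
    · exact Filter.Eventually.of_forall fun x => hb0 _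
    · exact ContinuousOn.integrableOn_compact hBc (by fun_prop)
  set V := (volume : Measure (EuclideanSpace ℝ (Fin d))).real B with hV
  have hV0 : 0 ≤ V := measureReal_nonneg
  have hVfin : (volume : Measure (EuclideanSpace ℝ (Fin d))) B < ⊤ := hBc.measure_lt_top
  obtain ⟨η, hη, hηc⟩ : ∃ η > 0, η * V + η * |J| * V < c := by
    refine ⟨c / (2 * (V + |J| * V + 1)), by positivity, ?_⟩
    have : c / (2 * (V + |J| * V + 1)) * (V + |J| * V + 1) = c / 2 := by field_simp
    have h2 : 0 < c / (2 * (V + |J| * V + 1)) := by positivity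
    nlinarith
  obtain ⟨p, hp⟩ := exists_polynomial_near_of_continuousOn 0 (M ^ 2) b hbc.continuousOn η hη
  have hmain := br_poly φ hφ R hs p
  have hpc : Continuous (fun s : ℝ => p.eval s) := p.continuous
  have h1 : ∀ x ∈ B, |p.eval (‖x‖ ^ 2) - b (‖x‖ ^ 2)| < η := by
    intro x hx
    apply hp
    have := hM x hx
    rw [Real.norm_of_nonneg (by positivity)] at this
    have h3 := norm_nonneg x
    have h4 := norm_nonneg (x + φ x)
    refine ⟨by positivity, by gcongr; linarith⟩
  have h2 : ∀ x ∈ B, |p.eval (‖x + φ x‖ ^ 2)| < η := by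
    intro x hx
    have h5 := hp (‖x + φ x‖ ^ 2) (by
      have := hM x hx
      rw [Real.norm_of_nonneg (by positivity)] at this
      have h3 := norm_nonneg x
      have h4 := norm_nonneg (x + φ x)
      refine ⟨by positivity, by gcongr; linarith⟩)
    have : b (‖x + φ x‖ ^ 2) = 0 := by
      apply max_eq_left
      have := hcon x
      nlinarith
    rwa [this, sub_zero] at h5
  have hL : ‖∫ x in B, p.eval (‖x + φ x‖ ^ 2) *
        ((ContinuousLinearMap.id ℝ _ + fderiv ℝ φ x).det)‖ ≤ (η * |J|) * V := by
    apply norm_setIntegral_le_of_norm_le_const hVfin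
    intro x hx
    rw [norm_mul]
    gcongr
    · exact (h2 x hx).le
    · exact (hJ x hx).trans (le_abs_self J)
  have hRr : ‖∫ x in B, (p.eval (‖x‖ ^ 2) - b (‖x‖ ^ 2))‖ ≤ η * V := by
    apply norm_setIntegral_le_of_norm_le_const hVfin
    intro x hx
    exact (h1 x hx).le
  rw [integral_sub, ← hmain] at hRr
  · rw [Real.norm_eq_abs] at hL hRr
    have := abs_le.1 hL
    have := abs_le.1 hRr
    linarith
  · exact ContinuousOn.integrableOn_compact hBc (by fun_prop)
  · exact ContinuousOn.integrableOn_compact hBc (by fun_prop)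

theorem br_euclid {d : ℕ} (G : EuclideanSpace ℝ (Fin d) → EuclideanSpace ℝ (Fin d))
    (hG : Continuous G) (R : ℝ) (hR : 0 < R) (hb : ∀ x, ‖G x‖ ≤ R) : ∃ x, G x = x := by
  by_contra hcon
  push Not at hcon
  let χ : EuclideanSpace ℝ (Fin d) → ℝ := fun x => max 0 (min 1 (R + 2 - ‖x‖))
  have hχ : Continuous χ := by fun_prop
  have hχ0 : ∀ x, 0 ≤ χ x := fun x => le_max_left _ _
  have hχ1 : ∀ x, χ x ≤ 1 := fun x => max_le zero_le_one (min_le_left _ _)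
  let φ : EuclideanSpace ℝ (Fin d) → EuclideanSpace ℝ (Fin d) := fun x => - (χ x • G x)
  have hφc : Continuous φ := by fun_prop
  have hne : ∀ x, x + φ x ≠ 0 := by
    intro x hx
    have hx' : x = χ x • G x := by
      have : x - χ x • G x = 0 := by simpa [φ, sub_eq_add_neg] using hx
      exact sub_eq_zero.1 this
    have hle : ‖x‖ ≤ R := by
      rw [hx', norm_smul, Real.norm_of_nonneg (hχ0 x)]
      calc χ x * ‖G x‖ ≤ 1 * R := by
            gcongr
            · exact hχ1 x
            · exact hb x
        _ = R := one_mul R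
    have h1 : χ x = 1 := by
      simp only [χ]
      rw [min_eq_left (by linarith), max_eq_right zero_le_one]
    rw [h1, one_smul] at hx'
    exact hcon x hx'.symm
  have hout : ∀ x, R + 2 ≤ ‖x‖ → φ x = 0 := by
    intro x hx
    have : χ x = 0 := by
      simp only [χ]
      apply max_eq_left
      exact (min_le_right _ _).trans (by linarith)
    simp [φ, this]
  obtain ⟨g, hg, hgd, hgs⟩ := hφc.exists_contDiff_approx 1 (ε := fun x => ‖x + φ x‖ / 2) (by fun_prop)
    (fun x => half_pos (norm_pos_iff.2 (hne x)))
  have hgout : ∀ x, R + 2 ≤ ‖x‖ → g x = 0 := by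
    intro x hx
    by_contra h
    exact hgs h (hout x hx)
  have hgne : ∀ x, x + g x ≠ 0 := by
    intro x hx
    have := hgd x
    have h0 := norm_pos_iff.2 (hne x)
    have h2 : x + φ x = (x + g x) - (g x - φ x) := by abel
    rw [dist_eq_norm] at this
    rw [h2, hx, zero_sub, norm_neg] at this
    rw [h2, hx, zero_sub, norm_neg] at h0
    linarith
  have hgc : Continuous g := hg.continuous
  obtain ⟨x0, -, hx0⟩ := (isCompact_closedBall (0 : EuclideanSpace ℝ (Fin d)) (R + 2)).exists_isMinOn
    ⟨0, by simp; linarith⟩ (f := fun x => ‖x + g x‖) (by fun_prop)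
  have hmin : 0 < min 1 ‖x0 + g x0‖ := lt_min one_pos (norm_pos_iff.2 (hgne x0))
  obtain ⟨x, hx⟩ := br_zero g hg (R + 2) (by linarith) hgout _ hmin
  by_cases h : ‖x‖ ≤ R + 2
  · have := hx0 (show x ∈ Metric.closedBall 0 (R + 2) by simpa using h)
    simp only [Set.mem_ofPred_eq] at this
    exact absurd (hx.trans_le (min_le_right _ _)) (not_lt.2 this)
  · push Not at h
    rw [hgout x h.le, add_zero] at hx
    have := hx.trans_le (min_le_left _ _)
    linarith

theorem br_fix {V : Type*} [NormedAddCommGroup V] [NormedSpace ℝ V] [FiniteDimensional ℝ V]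
    (G : V → V) (hG : Continuous G) (R : ℝ) (hb : ∀ x, ‖G x‖ ≤ R) : ∃ x, G x = x := by
  let e := toEuclidean (E := V)
  let L : V →L[ℝ] EuclideanSpace ℝ (Fin (Module.finrank ℝ V)) := e.toContinuousLinearMap
  have hR : 0 ≤ R := (norm_nonneg _).trans (hb 0)
  obtain ⟨x, hx⟩ := br_euclid (fun y => e (G (e.symm y))) (by fun_prop)
    (‖L‖ * R + 1) (by positivity) (fun y => by
      have h1 := L.le_opNorm (G (e.symm y))
      have h2 : ‖L‖ * ‖G (e.symm y)‖ ≤ ‖L‖ * R := by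
        gcongr
        exact hb _
      have h3 : ‖e (G (e.symm y))‖ ≤ ‖L‖ * ‖G (e.symm y)‖ := h1
      linarith)
  refine ⟨e.symm x, ?_⟩
  apply e.injective
  simpa using hx

end BrouwerPart

/-- Radial projection of a vector to the sphere, with base point `p` at the origin. -/
noncomputable def sphNrm {m : ℕ} (p : Sph m) (v : EuclideanSpace ℝ (Fin (m + 1))) : Sph m :=
  open Classical in
  if h : v = 0 then p else ⟨‖v‖⁻¹ • v, by
    have : ‖v‖ ≠ 0 := norm_ne_zero_iff.2 h
    simp [norm_smul, this]⟩

theorem sphNrm_continuousAt {m : ℕ} (p : Sph m) (v : EuclideanSpace ℝ (Fin (m + 1))) (hv : v ≠ 0) :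
    ContinuousAt (sphNrm p) v := by
  rw [Topology.IsInducing.subtypeVal.continuousAt_iff]
  have : (Subtype.val ∘ sphNrm p) =ᶠ[nhds v] fun w => ‖w‖⁻¹ • w := by
    filter_upwards [isOpen_ne.mem_nhds hv] with w hw
    have hw' : w ≠ 0 := hw
    simp [sphNrm, hw']
  apply ContinuousAt.congr _ this.symm
  have : ‖v‖ ≠ 0 := norm_ne_zero_iff.2 hv
  fun_prop (disch := assumption)

theorem sphNrm_of_norm {m : ℕ} (p : Sph m) (v : EuclideanSpace ℝ (Fin (m + 1))) (hv : ‖v‖ = 1) :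
    (sphNrm p v : EuclideanSpace ℝ (Fin (m + 1))) = v := by
  have : v ≠ 0 := by rw [← norm_ne_zero_iff, hv]; exact one_ne_zero
  simp [sphNrm, this, hv]

/-- Insert `k` coordinates at positions `1, …, k`, and the base point elsewhere. -/
def insTuple {X : Type*} (n k : ℕ) (p : X) (x : Fin k → X) : Fin n → X :=
  fun j => if h : 0 < (j : ℕ) ∧ (j : ℕ) ≤ k then x ⟨(j : ℕ) - 1, by omega⟩ else p

theorem lower_bound (m n k : ℕ) (h : HasBidirPlanners (Sph m) n k) : n ≤ k := by
  classical
  by_contra hlt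
  push Not at hlt
  obtain ⟨U, hUo, hUc, -, hs⟩ := h
  choose s hs1 hs2 using hs
  clear hs2
  let p : Sph m := ⟨EuclideanSpace.single 0 1, by simp⟩
  obtain ⟨u, hu⟩ := BumpCovering.exists_isSubordinate (isClosed_univ (X := Fin n → Sph m)) U hUo
    (by rw [hUc])
  let x : (Fin k → EuclideanSpace ℝ (Fin (m + 1))) → Fin n → Sph m := fun y =>
    insTuple n k p (fun i => sphNrm p (y i))
  let r : (Fin k → EuclideanSpace ℝ (Fin (m + 1))) → ℝ := fun y => ∏ i, min 1 ‖y i‖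
  have hrc : Continuous r := by fun_prop
  let t : (Fin k → EuclideanSpace ℝ (Fin (m + 1))) → ℝ := fun y => max 0 (2 * r y - 1)
  have htc : Continuous t := by fun_prop
  have hxc : ∀ y, (∀ i, y i ≠ 0) → ContinuousAt x y := by
    intro y hy
    rw [continuousAt_pi]
    intro j
    by_cases hj : 0 < (j : ℕ) ∧ (j : ℕ) ≤ k
    · simp only [x, insTuple, hj, and_self, dif_pos]
      exact ContinuousAt.comp (f := fun y : Fin k → EuclideanSpace ℝ (Fin (m + 1)) => y _)
        (sphNrm_continuousAt p _ (hy _)) (continuous_apply _).continuousAt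
    · simp only [x, insTuple, hj, dif_neg, not_false_eq_true]
      exact continuousAt_const
  have hr0 : ∀ y, r y ≠ 0 → ∀ i, y i ≠ 0 := by
    intro y hy i hi
    apply hy
    apply Finset.prod_eq_zero (Finset.mem_univ i)
    simp [hi]
  let P : Fin k → Fin n := fun i => ⟨(i : ℕ) + 1, by omega⟩
  have hxP : ∀ y i, x y (P i) = sphNrm p (y i) := by
    intro y i
    have : 0 < ((P i : Fin n) : ℕ) ∧ ((P i : Fin n) : ℕ) ≤ k := ⟨Nat.succ_pos _, i.2⟩
    simp only [x, insTuple, this, and_self, dif_pos]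
    simp [P]
  have hx0 : ∀ y, x y ⟨0, by omega⟩ = p := by
    intro y
    simp [x, insTuple]
  let T : Fin k → (Fin k → EuclideanSpace ℝ (Fin (m + 1))) → unitInterval := fun i y =>
    Set.projIcc 0 1 zero_le_one (t y * u i (x y) * (evalPt n (P i) : ℝ))
  let g : Fin k → (Fin k → EuclideanSpace ℝ (Fin (m + 1))) → Sph m := fun i y =>
    if hy : x y ∈ U i then s i ⟨x y, hy⟩ (T i y) else p
  have hTz : ∀ i y, t y * u i (x y) = 0 → g i y = p := by
    intro i y h0
    have hT : T i y = evalPt n ⟨0, by omega⟩ := by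
      simp only [T, h0, zero_mul]
      rw [Set.projIcc_left]
      ext
      simp [evalPt]
    simp only [g]
    split_ifs with hy
    · rw [hT, hs1]
      exact hx0 y
    · rfl
  have hgc : ∀ i, Continuous (g i) := by
    intro i
    rw [continuous_iff_continuousAt]
    intro y
    by_cases hr : r y = 0
    · have : g i =ᶠ[nhds y] fun _ => p := by
        have h1 : ∀ᶠ z in nhds y, r z < 1 / 2 :=
          hrc.continuousAt.eventually_lt continuousAt_const (by rw [hr]; norm_num)
        filter_upwards [h1] with z hz
        apply hTz
        have : t z = 0 := max_eq_left (by linarith)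
        rw [this, zero_mul]
      exact continuousAt_const.congr this.symm
    · have hxy := hxc y (hr0 y hr)
      by_cases hsup : x y ∈ tsupport (u i)
      · have hyU : x y ∈ U i := hu i hsup
        have hev : ∀ᶠ z in nhds y, x z ∈ U i := hxy.eventually_mem ((hUo i).mem_nhds hyU)
        obtain ⟨O, hO, hOo, hyO⟩ := eventually_nhds_iff.1
          (hev.and (hrc.continuousAt.eventually_ne hr))
        have hxO : ContinuousOn x O := fun z hz => (hxc z (hr0 z (hO z hz).2)).continuousWithinAt
        have hgO : ContinuousOn (g i) O := by
          rw [continuousOn_iff_continuous_domRestrict]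
          have hxO' : Continuous (fun z : O => (⟨x z, (hO z z.2).1⟩ : U i)) :=
            Continuous.subtype_mk (continuousOn_iff_continuous_domRestrict.1 hxO) _
          have hTc : Continuous (fun z : O => T i z) := by
            apply continuous_projIcc.comp
            have h1 : Continuous (fun z : O => u i (x z)) :=
              (u i).continuous.comp (continuousOn_iff_continuous_domRestrict.1 hxO)
            have h2 : Continuous (fun z : O => t z) := htc.comp continuous_subtype_val
            exact (h2.mul h1).mul continuous_const
          have : O.domRestrict (g i) = fun z : O => s i ⟨x z, (hO z z.2).1⟩ (T i z) := by
            funext z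
            exact dif_pos (hO z z.2).1
          rw [this]
          exact ((s i).continuous.comp hxO').eval hTc
        exact hgO.continuousAt (hOo.mem_nhds hyO)
      · have : g i =ᶠ[nhds y] fun _ => p := by
          have h1 : ∀ᶠ z in nhds y, x z ∈ (tsupport (u i))ᶜ :=
            hxy.eventually_mem ((isClosed_tsupport _).isOpen_compl.mem_nhds hsup)
          filter_upwards [h1] with z hz
          apply hTz
          rw [image_eq_zero_of_notMem_tsupport hz, mul_zero]
        exact continuousAt_const.congr this.symm
  obtain ⟨y, hy⟩ := br_fix (V := Fin k → EuclideanSpace ℝ (Fin (m + 1)))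
    (fun y i => - (g i y : EuclideanSpace ℝ (Fin (m + 1)))) (by
      apply continuous_pi
      intro i
      exact (continuous_subtype_val.comp (hgc i)).neg) 1 (by
      intro y
      rw [pi_norm_le_iff_of_nonneg zero_le_one]
      intro i
      rw [norm_neg]
      exact (mem_sphere_zero_iff_norm.1 (g i y).2).le)
  have hyi : ∀ i, - (g i y : EuclideanSpace ℝ (Fin (m + 1))) = y i := fun i => congrFun hy i
  have hn : ∀ i, ‖y i‖ = 1 := by
    intro i
    rw [← hyi, norm_neg]
    exact mem_sphere_zero_iff_norm.1 (g i y).2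
  obtain ⟨i, hi⟩ := u.eventuallyEq_one' (x y) (Set.mem_univ _)
  have hui : u i (x y) = 1 := hi.eq_of_nhds
  have hr1 : r y = 1 := by simp [r, hn]
  have ht1 : t y = 1 := by simp only [t, hr1]; norm_num
  have hxU : x y ∈ U i := by
    apply hu i
    apply subset_tsupport
    simp [hui]
  have hT1 : T i y = evalPt n (P i) := by
    simp only [T, ht1, hui, one_mul]
    exact Set.projIcc_val _ _
  have hgi : (g i y : EuclideanSpace ℝ (Fin (m + 1))) = y i := by
    simp only [g]
    rw [dif_pos hxU, hT1, hs1]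
    simp only
    rw [hxP, sphNrm_of_norm p _ (hn i)]
  have h0 := hyi i
  rw [hgi] at h0
  have h1 : y i = 0 := by
    have : (2 : ℝ) • y i = 0 := by
      rw [two_smul]; nth_rewrite 1 [← h0]; simp
    simpa using this
  have := hn i
  rw [h1, norm_zero] at this
  exact zero_ne_one this

theorem exists_J (m : ℕ) (hm : Odd m) :
    ∃ J : EuclideanSpace ℝ (Fin (m + 1)) → EuclideanSpace ℝ (Fin (m + 1)),
      Continuous J ∧ (∀ x, inner ℝ x (J x) = 0) ∧ ∀ x, ‖J x‖ = ‖x‖ := by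
  obtain ⟨r, rfl⟩ := hm
  let pi2 : Fin (2 * r + 1 + 1) → Fin (2 * r + 1 + 1) := fun i =>
    if h : (i : ℕ) % 2 = 0 then ⟨i + 1, by omega⟩ else ⟨i - 1, by omega⟩
  let sg : Fin (2 * r + 1 + 1) → ℝ := fun i => if (i : ℕ) % 2 = 0 then -1 else 1
  have hpi : ∀ i, pi2 (pi2 i) = i := by
    intro i
    by_cases h : (i : ℕ) % 2 = 0
    · have h' : ((i : ℕ) + 1) % 2 ≠ 0 := by omega
      ext
      simp [pi2, h, h']
    · have h' : ((i : ℕ) - 1) % 2 = 0 := by omega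
      ext
      simp [pi2, h, h']
      omega
  have hsg : ∀ i, sg (pi2 i) = - sg i := by
    intro i
    by_cases h : (i : ℕ) % 2 = 0
    · have h' : ((i : ℕ) + 1) % 2 ≠ 0 := by omega
      simp [pi2, sg, h, h']
    · have h' : ((i : ℕ) - 1) % 2 = 0 := by omega
      simp [pi2, sg, h, h']
  have hne : ∀ i, pi2 i ≠ i := by
    intro i hi
    have h1 := hsg i
    rw [hi] at h1
    have h2 : sg i = 0 := by linarith
    simp only [sg] at h2
    split_ifs at h2 <;> norm_num at h2
  refine ⟨fun x => WithLp.toLp 2 (fun i => sg i * x (pi2 i)), by fun_prop, ?_, ?_⟩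
  · intro x
    rw [PiLp.inner_apply]
    apply Finset.sum_involution (fun i _ => pi2 i)
    · intro i _
      simp only [hpi, hsg, RCLike.inner_apply, conj_trivial]
      ring
    · intro i _ _
      exact hne i
    · intro i _
      exact Finset.mem_univ _
    · intro i _
      exact hpi i
  · intro x
    rw [EuclideanSpace.norm_eq, EuclideanSpace.norm_eq]
    congr 1
    have hsq : ∀ i, sg i ^ 2 = 1 := by
      intro i
      simp only [sg]
      split_ifs <;> norm_num
    simp only [Real.norm_eq_abs, sq_abs, mul_pow, hsq, one_mul]
    exact Equiv.sum_comp (⟨pi2, pi2, hpi, hpi⟩ : Equiv.Perm _) (fun i => x i ^ 2)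

theorem edge_one {E : Type*} [NormedAddCommGroup E] [InnerProductSpace ℝ E] (a b : E)
    (ha : ‖a‖ = 1) (hb : ‖b‖ = 1) (s : ℝ) (h0 : 0 ≤ s) (h1 : s ≤ 1) (hab : a + b ≠ 0) :
    (1 - s) • a + s • b ≠ 0 := by
  intro h
  have h2 : (1 - s) • a = - (s • b) := eq_neg_of_add_eq_zero_left h
  have h3 := congrArg norm h2
  rw [norm_neg, norm_smul, norm_smul, ha, hb, Real.norm_of_nonneg h0,
    Real.norm_of_nonneg (by linarith)] at h3
  have h4 : s = 1 / 2 := by linarith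
  subst h4
  apply hab
  have h5 : (1 / 2 : ℝ) • (a + b) = 0 := by
    rw [smul_add, ← h]; norm_num
  exact (smul_eq_zero.1 h5).resolve_left (by norm_num)

theorem edge_two {E : Type*} [NormedAddCommGroup E] [InnerProductSpace ℝ E] (a b v : E)
    (ha : ‖a‖ = 1) (hv : ‖v‖ = 1) (hav : inner ℝ a v = 0)
    (s : ℝ) (h0 : 0 ≤ s) (h1 : s ≤ 1) (hab : ‖a + b‖ < 1 / 2) :
    (1 - s) • a + s • b + (4 * (s * (1 - s))) • v ≠ 0 := by
  intro h
  have haa : inner ℝ a a = 1 := by rw [real_inner_self_eq_norm_sq, ha]; norm_num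
  have hvv : inner ℝ v v = 1 := by rw [real_inner_self_eq_norm_sq, hv]; norm_num
  have hva : inner ℝ v a = 0 := by rw [real_inner_comm, hav]
  have e1 := congrArg (fun w => inner ℝ a w) h
  have e2 := congrArg (fun w => inner ℝ v w) h
  simp only [inner_add_right, inner_smul_right, inner_zero_right, haa, hvv, hva, hav] at e1 e2
  have b1 := abs_real_inner_le_norm a (a + b)
  have b2 := abs_real_inner_le_norm v (a + b)
  rw [ha, one_mul, inner_add_right, haa] at b1
  rw [hv, one_mul, inner_add_right, hva, zero_add] at b2
  have c1 := abs_le.1 (b1.trans hab.le)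
  have c2 := abs_le.1 (b2.trans hab.le)
  generalize inner ℝ a b = α at *
  generalize inner ℝ v b = γ at *
  have hs : 0 < s := by
    rcases h0.eq_or_lt with h | h
    · subst h; norm_num at e1
    · exact h
  have e3 : γ + 4 * (1 - s) = 0 := by
    have : s * (γ + 4 * (1 - s)) = 0 := by linarith
    exact (mul_eq_zero.1 this).resolve_left hs.ne'
  nlinarith [c1.1, c1.2, c2.1, c2.2]

/-- The hat function centred at `j`. -/
noncomputable def hat (j : ℕ) (τ : ℝ) : ℝ := max 0 (1 - |τ - j|)

theorem hat_continuous (j : ℕ) : Continuous (hat j) := by unfold hat; fun_prop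

theorem hat_zero (j : ℕ) (τ : ℝ) (h : 1 ≤ |τ - j|) : hat j τ = 0 := max_eq_left (by linarith)

theorem hat_left (e : ℕ) (s : ℝ) (h0 : 0 ≤ s) (h1 : s ≤ 1) : hat e (e + s) = 1 - s := by
  unfold hat
  rw [add_sub_cancel_left, abs_of_nonneg h0, max_eq_right (by linarith)]

theorem hat_right (e : ℕ) (s : ℝ) (h0 : 0 ≤ s) (h1 : s ≤ 1) : hat (e + 1) (e + s) = s := by
  unfold hat
  have : (e : ℝ) + s - ((e + 1 : ℕ) : ℝ) = s - 1 := by push_cast; ring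
  rw [this, abs_of_nonpos (by linarith), max_eq_right (by linarith)]
  ring

theorem hat_other (e j : ℕ) (s : ℝ) (h0 : 0 ≤ s) (h1 : s ≤ 1) (hj : j ≠ e) (hj' : j ≠ e + 1) :
    hat j (e + s) = 0 := by
  apply hat_zero
  rcases lt_or_gt_of_ne hj with h | h
  · have : (j : ℝ) + 1 ≤ e := by exact_mod_cast h
    rw [abs_of_nonneg (by linarith)]
    linarith
  · have h2 : e + 2 ≤ j := by omega
    have : (e : ℝ) + 2 ≤ j := by exact_mod_cast h2
    rw [abs_of_nonpos (by linarith)]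
    linarith

theorem hat_symm (N j : ℕ) (hj : j ≤ N) (τ : ℝ) : hat (N - j) τ = hat j (N - τ) := by
  unfold hat
  rw [Nat.cast_sub hj, ← abs_neg]
  congr 3
  ring

/-- The end of the edge `e` that is closer to the middle vertex. -/
def innerEnd (q : ℕ) (e : Fin (2 * q)) : Fin (2 * q + 1) := if (e : ℕ) < q then e.succ else e.castSucc

theorem innerEnd_rev (q : ℕ) (e : Fin (2 * q)) : innerEnd q e.rev = (innerEnd q e).rev := by
  unfold innerEnd
  have := e.2
  by_cases h : (e : ℕ) < q
  · have h' : ¬ ((e.rev : Fin (2 * q)) : ℕ) < q := by rw [Fin.val_rev]; omega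
    rw [if_pos h, if_neg h', Fin.rev_succ]
  · have h' : ((e.rev : Fin (2 * q)) : ℕ) < q := by rw [Fin.val_rev]; omega
    rw [if_neg h, if_pos h', Fin.rev_castSucc]

/-- The unnormalised path through the points `x j`, with detours along `J` on selected edges. -/
noncomputable def rawPath {E : Type*} [NormedAddCommGroup E] [NormedSpace ℝ E] (q : ℕ) (J : E → E)
    (ε : Fin (2 * q) → ℝ) (x : Fin (2 * q + 1) → E) (τ : ℝ) : E :=
  ∑ j : Fin (2 * q + 1), hat j τ • x j +
    ∑ e : Fin (2 * q), (ε e * (4 * (hat e τ * hat (e + 1) τ))) • J (x (innerEnd q e))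

theorem rawPath_edge {E : Type*} [NormedAddCommGroup E] [NormedSpace ℝ E] (q : ℕ) (J : E → E)
    (ε : Fin (2 * q) → ℝ) (x : Fin (2 * q + 1) → E) (e : Fin (2 * q)) (s : ℝ)
    (h0 : 0 ≤ s) (h1 : s ≤ 1) :
    rawPath q J ε x (e + s) = (1 - s) • x e.castSucc + s • x e.succ +
      (ε e * (4 * ((1 - s) * s))) • J (x (innerEnd q e)) := by
  unfold rawPath
  congr 1
  · rw [Finset.sum_eq_add e.castSucc e.succ]
    · rw [Fin.val_castSucc, Fin.val_succ, hat_left _ _ h0 h1, hat_right _ _ h0 h1]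
    · exact (Fin.castSucc_lt_succ (i := e)).ne
    · intro j _ hj
      rw [hat_other e j s h0 h1, zero_smul]
      · intro h; exact hj.1 (Fin.ext h)
      · intro h; exact hj.2 (Fin.ext h)
    · intro h; exact absurd (Finset.mem_univ _) h
    · intro h; exact absurd (Finset.mem_univ _) h
  · rw [Finset.sum_eq_single e]
    · rw [hat_left _ _ h0 h1, hat_right _ _ h0 h1]
    · intro e' _ he
      have hne : (e' : ℕ) ≠ e := fun h => he (Fin.ext h)
      have : hat e' (e + s) * hat (e' + 1) (e + s) = 0 := by
        by_cases h : (e' : ℕ) = e + 1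
        · rw [hat_other e (e' + 1) s h0 h1 (by omega) (by omega), mul_zero]
        · rw [hat_other e e' s h0 h1 hne h, zero_mul]
      rw [this]; simp
    · intro h; exact absurd (Finset.mem_univ _) h

theorem rawPath_vertex {E : Type*} [NormedAddCommGroup E] [NormedSpace ℝ E] (q : ℕ) (hq : 0 < q)
    (J : E → E) (ε : Fin (2 * q) → ℝ) (x : Fin (2 * q + 1) → E) (j : Fin (2 * q + 1)) :
    rawPath q J ε x j = x j := by
  rcases Fin.eq_castSucc_or_eq_last j with ⟨e, rfl⟩ | rfl
  · have := rawPath_edge q J ε x e 0 le_rfl zero_le_one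
    simpa using this
  · have := rawPath_edge q J ε x ⟨2 * q - 1, by omega⟩ 1 zero_le_one le_rfl
    have h2 : (((⟨2 * q - 1, by omega⟩ : Fin (2 * q)) : ℕ) : ℝ) + 1 = ((Fin.last (2 * q) : Fin _) : ℕ) := by
      have : ((2 * q - 1 : ℕ) : ℝ) + 1 = ((2 * q - 1 + 1 : ℕ) : ℝ) := by push_cast; ring
      simp only [Fin.val_last]
      rw [this]
      congr 1
      omega
    rw [h2] at this
    rw [this]
    have h3 : Fin.succ (⟨2 * q - 1, by omega⟩ : Fin (2 * q)) = Fin.last (2 * q) := by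
      ext; simp; omega
    rw [h3]
    simp

theorem rawPath_rev {E : Type*} [NormedAddCommGroup E] [NormedSpace ℝ E] (q : ℕ)
    (J : E → E) (ε : Fin (2 * q) → ℝ) (x : Fin (2 * q + 1) → E) (τ : ℝ) :
    rawPath q J (fun e => ε e.rev) (fun j => x j.rev) τ = rawPath q J ε x ((2 * q : ℕ) - τ) := by
  unfold rawPath
  congr 1
  · rw [← Equiv.sum_comp Fin.revPerm]
    apply Finset.sum_congr rfl
    intro j _
    have := hat_symm (2 * q) j (by omega) τ
    have h2 : ((Fin.revPerm j : Fin (2 * q + 1)) : ℕ) = 2 * q - j := by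
      simp [Fin.val_rev]
    rw [h2, this]
    simp
  · rw [← Equiv.sum_comp Fin.revPerm]
    apply Finset.sum_congr rfl
    intro e _
    have he := e.2
    have h1 := hat_symm (2 * q) e (by omega) τ
    have h2 := hat_symm (2 * q) (e + 1) (by omega) τ
    have h3 : ((Fin.revPerm e : Fin (2 * q)) : ℕ) = 2 * q - (e + 1) := by
      simp [Fin.val_rev]
    have h4 : 2 * q - ((e : ℕ) + 1) + 1 = 2 * q - e := by omega
    rw [h3, h4, h1, h2]
    have h5 : (innerEnd q (Fin.revPerm e)).rev = innerEnd q e := by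
      rw [Fin.revPerm_apply, innerEnd_rev, Fin.rev_rev]
    simp only [h5]
    simp only [Fin.revPerm_apply, Fin.rev_rev]
    congr 1
    ring

theorem rawPath_ne {E : Type*} [NormedAddCommGroup E] [InnerProductSpace ℝ E] (q : ℕ) (hq : 0 < q)
    (J : E → E) (hJ1 : ∀ x, inner ℝ x (J x) = 0) (hJ2 : ∀ x, ‖J x‖ = ‖x‖)
    (ε : Fin (2 * q) → ℝ) (x : Fin (2 * q + 1) → E) (hx : ∀ j, ‖x j‖ = 1)
    (hε : ∀ e, (ε e = 0 ∧ 0 < ‖x e.castSucc + x e.succ‖) ∨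
      (ε e = 1 ∧ ‖x e.castSucc + x e.succ‖ < 1 / 2))
    (τ : ℝ) (h0 : 0 ≤ τ) (h1 : τ ≤ (2 * q : ℕ)) : rawPath q J ε x τ ≠ 0 := by
  obtain ⟨e, s, hs0, hs1, rfl⟩ : ∃ (e : Fin (2 * q)) (s : ℝ), 0 ≤ s ∧ s ≤ 1 ∧ τ = e + s := by
    rcases h1.eq_or_lt with h | h
    · refine ⟨⟨2 * q - 1, by omega⟩, 1, zero_le_one, le_rfl, ?_⟩
      rw [h]
      simp only
      rw [Nat.cast_sub (by omega)]
      push_cast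
      ring
    · have hf : ⌊τ⌋₊ < 2 * q := (Nat.floor_lt h0).2 h
      refine ⟨⟨⌊τ⌋₊, hf⟩, τ - ⌊τ⌋₊, ?_, ?_, ?_⟩
      · linarith [Nat.floor_le h0]
      · linarith [Nat.lt_floor_add_one τ]
      · simp
  rw [rawPath_edge q J ε x e s hs0 hs1]
  rcases hε e with ⟨he, hd⟩ | ⟨he, hd⟩
  · rw [he, zero_mul, zero_smul, add_zero]
    exact edge_one _ _ (hx _) (hx _) s hs0 hs1 (norm_pos_iff.1 hd)
  · rw [he, one_mul]
    unfold innerEnd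
    split_ifs
    · have := edge_two (x e.succ) (x e.castSucc) (J (x e.succ)) (hx _) (by rw [hJ2, hx]) (hJ1 _)
        (1 - s) (by linarith) (by linarith) (by rwa [add_comm])
      rw [sub_sub_cancel] at this
      rwa [add_comm ((1 - s) • x e.castSucc)]
    · have := edge_two (x e.castSucc) (x e.succ) (J (x e.castSucc)) (hx _) (by rw [hJ2, hx]) (hJ1 _)
        s hs0 hs1 hd
      rwa [mul_comm s] at this

/-- The open piece of tuples whose selected edges `S` are the most antipodal ones. -/
def edgeSet (m q : ℕ) (S : Finset (Fin (2 * q))) : Set (Fin (2 * q + 1) → Sph m) :=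
  {x | (∀ i ∈ S, ‖(x i.castSucc : EuclideanSpace ℝ (Fin (m + 1))) + x i.succ‖ < 1 / 2) ∧
    (∀ j, j ∉ S → 0 < ‖(x j.castSucc : EuclideanSpace ℝ (Fin (m + 1))) + x j.succ‖) ∧
    (∀ i ∈ S, ∀ j, j ∉ S → ‖(x i.castSucc : EuclideanSpace ℝ (Fin (m + 1))) + x i.succ‖ <
      ‖(x j.castSucc : EuclideanSpace ℝ (Fin (m + 1))) + x j.succ‖)}

theorem edgeSet_open (m q : ℕ) (S : Finset (Fin (2 * q))) : IsOpen (edgeSet m q S) := by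
  have hc : ∀ i : Fin (2 * q), Continuous (fun x : Fin (2 * q + 1) → Sph m =>
      ‖(x i.castSucc : EuclideanSpace ℝ (Fin (m + 1))) + x i.succ‖) := by
    intro i; fun_prop
  have : edgeSet m q S = (⋂ i : Fin (2 * q), ⋂ (_ : i ∈ S), {x : Fin (2 * q + 1) → Sph m |
      ‖(x i.castSucc : EuclideanSpace ℝ (Fin (m + 1))) + x i.succ‖ < 1 / 2}) ∩
      ((⋂ j : Fin (2 * q), ⋂ (_ : j ∉ S), {x : Fin (2 * q + 1) → Sph m |
        0 < ‖(x j.castSucc : EuclideanSpace ℝ (Fin (m + 1))) + x j.succ‖}) ∩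
      (⋂ i : Fin (2 * q), ⋂ (_ : i ∈ S), ⋂ j : Fin (2 * q), ⋂ (_ : j ∉ S),
        {x : Fin (2 * q + 1) → Sph m |
        ‖(x i.castSucc : EuclideanSpace ℝ (Fin (m + 1))) + x i.succ‖ <
          ‖(x j.castSucc : EuclideanSpace ℝ (Fin (m + 1))) + x j.succ‖})) := by
    ext x
    simp [edgeSet]
  rw [this]
  refine IsOpen.inter ?_ (IsOpen.inter ?_ ?_)
  · exact isOpen_iInter_of_finite fun i => isOpen_iInter_of_finite fun _ =>
      isOpen_lt (hc i) continuous_const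
  · exact isOpen_iInter_of_finite fun i => isOpen_iInter_of_finite fun _ =>
      isOpen_lt continuous_const (hc i)
  · exact isOpen_iInter_of_finite fun i => isOpen_iInter_of_finite fun _ =>
      isOpen_iInter_of_finite fun j => isOpen_iInter_of_finite fun _ => isOpen_lt (hc i) (hc j)

theorem edgeSet_unique (m q : ℕ) (S T : Finset (Fin (2 * q))) (hc : S.card = T.card)
    (x : Fin (2 * q + 1) → Sph m) (hS : x ∈ edgeSet m q S) (hT : x ∈ edgeSet m q T) : S = T := by
  by_contra hne
  have h1 : ¬ S ⊆ T := fun h => hne (Finset.eq_of_subset_of_card_le h hc.ge)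
  have h2 : ¬ T ⊆ S := fun h => hne (Finset.eq_of_subset_of_card_le h hc.le).symm
  obtain ⟨i, hi, hi'⟩ := Finset.not_subset.1 h1
  obtain ⟨j, hj, hj'⟩ := Finset.not_subset.1 h2
  exact lt_asymm (hS.2.2 i hi j hj') (hT.2.2 j hj i hi')

theorem edgeSet_rev (m q : ℕ) (S : Finset (Fin (2 * q))) (x : Fin (2 * q + 1) → Sph m)
    (hS : x ∈ edgeSet m q S) : rtuple x ∈ edgeSet m q (S.map Fin.revPerm.toEmbedding) := by
  have hmem : ∀ i, i ∈ S.map Fin.revPerm.toEmbedding ↔ i.rev ∈ S := by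
    intro i
    rw [Finset.mem_map_equiv]
    simp
  have hd : ∀ i : Fin (2 * q), ‖((rtuple x i.castSucc : Sph m) : EuclideanSpace ℝ (Fin (m + 1))) +
      (rtuple x i.succ : Sph m)‖
      = ‖(x i.rev.castSucc : EuclideanSpace ℝ (Fin (m + 1))) + x i.rev.succ‖ := by
    intro i
    simp only [rtuple, Fin.rev_castSucc, Fin.rev_succ]
    exact congrArg norm (add_comm _ _)
  refine ⟨?_, ?_, ?_⟩
  · intro i hi
    rw [hd]
    exact hS.1 _ ((hmem i).1 hi)
  · intro j hj
    rw [hd]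
    exact hS.2.1 _ (fun h => hj ((hmem j).2 h))
  · intro i hi j hj
    rw [hd, hd]
    exact hS.2.2 _ ((hmem i).1 hi) _ (fun h => hj ((hmem j).2 h))

open Classical in
/-- Indicator of the selected edges of `x`, where `k` edges are selected. -/
noncomputable def edgeInd (m q k : ℕ) (x : Fin (2 * q + 1) → Sph m) (e : Fin (2 * q)) : ℝ :=
  if ∃ S : Finset (Fin (2 * q)), S.card = k ∧ x ∈ edgeSet m q S ∧ e ∈ S then 1 else 0

open Classical in
theorem edgeInd_eq (m q k : ℕ) (x : Fin (2 * q + 1) → Sph m) (e : Fin (2 * q))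
    (S : Finset (Fin (2 * q))) (hk : S.card = k) (hx : x ∈ edgeSet m q S) :
    edgeInd m q k x e = if e ∈ S then 1 else 0 := by
  unfold edgeInd
  congr 1
  apply propext
  constructor
  · rintro ⟨T, hT, hxT, he⟩
    rwa [edgeSet_unique m q S T (by rw [hk, hT]) x hx hxT]
  · intro he
    exact ⟨S, hk, hx, he⟩

theorem upper_bound (m q : ℕ) (hm : Odd m) (hq : 0 < q) :
    HasBidirPlanners (Sph m) (2 * q + 1) (2 * q + 1) := by
  classical
  obtain ⟨J, hJc, hJ1, hJ2⟩ := exists_J m hm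
  let p : Sph m := ⟨EuclideanSpace.single 0 1, by simp⟩
  let U : Fin (2 * q + 1) → Set (Fin (2 * q + 1) → Sph m) := fun k =>
    ⋃ S : Finset (Fin (2 * q)), ⋃ (_ : S.card = k), edgeSet m q S
  have hUm : ∀ k x, x ∈ U k ↔ ∃ S : Finset (Fin (2 * q)), S.card = k ∧ x ∈ edgeSet m q S := by
    intro k x
    simp [U]
  refine ⟨U, ?_, ?_, ?_, ?_⟩
  · intro k
    exact isOpen_iUnion fun S => isOpen_iUnion fun _ => edgeSet_open m q S
  · rw [Set.eq_univ_iff_forall]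
    intro x
    rw [Set.mem_iUnion]
    let S : Finset (Fin (2 * q)) := Finset.univ.filter
      (fun e => ‖(x e.castSucc : EuclideanSpace ℝ (Fin (m + 1))) + x e.succ‖ = 0)
    have hS : ∀ e, e ∈ S ↔ ‖(x e.castSucc : EuclideanSpace ℝ (Fin (m + 1))) + x e.succ‖ = 0 := by
      intro e
      simp only [S, Finset.mem_filter, Finset.mem_univ, true_and]
    have hcard : S.card < 2 * q + 1 := by
      have := Finset.card_le_univ S
      rw [Fintype.card_fin] at this
      omega
    refine ⟨⟨S.card, hcard⟩, (hUm _ _).2 ⟨S, rfl, ?_, ?_, ?_⟩⟩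
    · intro i hi
      rw [(hS i).1 hi]; norm_num
    · intro j hj
      exact lt_of_le_of_ne (norm_nonneg _) (fun h => hj ((hS j).2 h.symm))
    · intro i hi j hj
      rw [(hS i).1 hi]
      exact lt_of_le_of_ne (norm_nonneg _) (fun h => hj ((hS j).2 h.symm))
  · intro k x hx
    obtain ⟨S, hS, hxS⟩ := (hUm _ _).1 hx
    exact (hUm _ _).2 ⟨_, by rw [Finset.card_map, hS], edgeSet_rev m q S x hxS⟩
  · intro k
    let L : (Fin (2 * q + 1) → Sph m) → ℝ → EuclideanSpace ℝ (Fin (m + 1)) := fun x τ =>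
      rawPath q J (edgeInd m q k x) (fun j => (x j : EuclideanSpace ℝ (Fin (m + 1)))) τ
    have hLne : ∀ x ∈ U k, ∀ t : unitInterval, L x ((2 * q : ℕ) * (t : ℝ)) ≠ 0 := by
      intro x hx t
      obtain ⟨S, hS, hxS⟩ := (hUm _ _).1 hx
      apply rawPath_ne q hq J hJ1 hJ2
      · intro j
        exact mem_sphere_zero_iff_norm.1 (x j).2
      · intro e
        rw [edgeInd_eq m q k x e S hS hxS]
        by_cases he : e ∈ S
        · right; exact ⟨if_pos he, hxS.1 e he⟩
        · left; exact ⟨if_neg he, hxS.2.1 e he⟩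
      · have := t.2.1
        positivity
      · have := t.2.2
        have h2 : (0 : ℝ) ≤ (2 * q : ℕ) := Nat.cast_nonneg _
        nlinarith
    have hind : ∀ e, Continuous (fun x : U k => edgeInd m q k x e) := by
      intro e
      rw [continuous_iff_continuousAt]
      intro x
      obtain ⟨S, hS, hxS⟩ := (hUm _ _).1 x.2
      have : (fun x : U k => edgeInd m q k x e) =ᶠ[nhds x] fun _ => if e ∈ S then 1 else 0 := by
        have : ∀ᶠ y : U k in nhds x, (y : Fin (2 * q + 1) → Sph m) ∈ edgeSet m q S :=
          continuous_subtype_val.continuousAt.eventually_mem ((edgeSet_open m q S).mem_nhds hxS)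
        filter_upwards [this] with y hy
        exact edgeInd_eq m q k y e S hS hy
      exact continuousAt_const.congr this.symm
    have hLc : Continuous (fun z : U k × unitInterval => L z.1 ((2 * q : ℕ) * (z.2 : ℝ))) := by
      simp only [L, rawPath]
      have hτ : Continuous (fun z : U k × unitInterval => ((2 * q : ℕ) : ℝ) * (z.2 : ℝ)) :=
        continuous_const.mul (continuous_subtype_val.comp continuous_snd)
      have hpt : ∀ j : Fin (2 * q + 1), Continuous (fun z : U k × unitInterval =>
          ((z.1 : Fin (2 * q + 1) → Sph m) j : EuclideanSpace ℝ (Fin (m + 1)))) := fun j =>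
        continuous_subtype_val.comp
          ((continuous_apply j).comp (continuous_subtype_val.comp continuous_fst))
      apply Continuous.add
      · apply continuous_finsetSum
        intro j _
        exact ((hat_continuous j).comp hτ).smul (hpt j)
      · apply continuous_finsetSum
        intro e _
        exact (((hind e).comp continuous_fst).mul (continuous_const.mul
          (((hat_continuous e).comp hτ).mul ((hat_continuous (e + 1)).comp hτ)))).smul
          (hJc.comp (hpt _))
    have hFc : Continuous (fun z : U k × unitInterval => sphNrm p (L z.1 ((2 * q : ℕ) * (z.2 : ℝ)))) := by
      rw [continuous_iff_continuousAt]
      intro z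
      exact ContinuousAt.comp (f := fun z : U k × unitInterval => L z.1 ((2 * q : ℕ) * (z.2 : ℝ)))
        (sphNrm_continuousAt p _ (hLne z.1 z.1.2 z.2)) hLc.continuousAt
    refine ⟨ContinuousMap.curry ⟨_, hFc⟩, ?_, ?_⟩
    · intro x j
      have hτ : ((2 * q : ℕ) : ℝ) * (evalPt (2 * q + 1) j : ℝ) = (j : ℕ) := by
        have : ((2 * q : ℕ) : ℝ) ≠ 0 := by
          have : 2 * q ≠ 0 := by omega
          exact_mod_cast this
        simp only [evalPt]
        push_cast at this ⊢
        rw [add_sub_cancel_right]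
        field_simp
      ext1
      simp only [ContinuousMap.curry_apply, ContinuousMap.coe_mk]
      rw [hτ]
      have hL : L x (j : ℕ) = x.1 j := rawPath_vertex q hq J _ _ j
      rw [hL]
      exact sphNrm_of_norm p _ (mem_sphere_zero_iff_norm.1 (x.1 j).2)
    · intro x hx
      ext1 t
      simp only [ContinuousMap.curry_apply, ContinuousMap.coe_mk, rpath, ContinuousMap.comp_apply]
      congr 1
      obtain ⟨S, hS, hxS⟩ := (hUm _ _).1 x.2
      have hε : edgeInd m q k (rtuple x.1) = fun e => edgeInd m q k x.1 e.rev := by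
        funext e
        rw [edgeInd_eq m q k _ e _ (by rw [Finset.card_map, hS]) (edgeSet_rev m q S x.1 hxS),
          edgeInd_eq m q k _ e.rev S hS hxS]
        congr 1
        rw [Finset.mem_map_equiv]
        simp
      have := rawPath_rev q J (edgeInd m q k x.1)
        (fun j => (x.1 j : EuclideanSpace ℝ (Fin (m + 1)))) ((2 * q : ℕ) * (t : ℝ))
      simp only [L, hε]
      refine Eq.trans this ?_
      congr 1
      rw [unitInterval.coe_symm_eq]
      ring

/-- For every `m ≥ 1` odd and every `n ≥ 3` odd,
`TC^β_n(S^m) = n`. -/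
theorem TCbeta_sphere_odd (m n : ℕ) (hm : 1 ≤ m) (hmo : Odd m) (hn : 3 ≤ n) (hno : Odd n) :
    TCbeta (Sph m) n = (n : ℕ∞) := by
  obtain ⟨q, rfl⟩ := hno
  apply le_antisymm
  · exact sInf_le ⟨2 * q + 1, rfl, upper_bound m q hmo (by omega)⟩
  · apply le_sInf
    rintro k ⟨k', rfl, hk⟩
    exact_mod_cast lower_bound m (2 * q + 1) k' hk
end
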